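/- arXiv:2008.11144 — 2 statements merged into one kernel-verified Lean document; each statement's English description precedes it below -/
import Mathlib

section
/- Let M > 1, R > 0, c > 0, and let Ω_i ⊆ B_R be a sequence of M-uniform domains with diam(Ω_i) ≥ c and χ_{Ω_i} → χ_Ω in L¹ for some limit set Ω (normalized so 0 < |Ω ∩ B_r(x)| < ω_n rⁿ for all x ∈ ∂Ω, r > 0). Then the interior of Ω is nonempty, and int(Ω) is an M-uniform domain with |Ω \ int(Ω)| = 0; hence χ_{Ω_i} → χ_{int(Ω)} in L¹. -/
open MeasureTheory Metric Set Filter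

/-- A connected open set `Ω` is `M`-uniform if any two points of its closure can be joined
by a rectifiable curve in the closure of length at most `M` times their distance, which
stays at distance from the boundary at least `1/M` times the minimum of the distances to
the two endpoints. -/
def IsMUniform {n : ℕ} (M : ℝ) (Ω : Set (EuclideanSpace ℝ (Fin n))) : Prop :=
  IsOpen Ω ∧ IsConnected Ω ∧
  ∀ x₁ ∈ closure Ω, ∀ x₂ ∈ closure Ω, ∃ γ : ℝ → EuclideanSpace ℝ (Fin n),
    ContinuousOn γ (Set.Icc 0 1) ∧ γ 0 = x₁ ∧ γ 1 = x₂ ∧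
    (∀ t ∈ Set.Icc (0:ℝ) 1, γ t ∈ closure Ω) ∧
    eVariationOn γ (Set.Icc 0 1) ≤ ENNReal.ofReal (M * dist x₁ x₂) ∧
    (∀ t ∈ Set.Icc (0:ℝ) 1,
      Metric.infDist (γ t) (frontier Ω) ≥ (1 / M) * min (dist (γ t) x₁) (dist (γ t) x₂))

/-!
The idea is to pass to the limit along an ultrafilter. Every closure point of a uniform domain
of diameter at least `c` has, at each scale `r ≲ c`, a ball of radius `r` inside the domain at
distance `M * r`. Limits of such balls have a null part outside `Ω`, and because no frontier
point of `Ω` can be removed by modification on a null set, they lie in the interior of `Ω`.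
Hence the frontier of `Ω` is porous, and so null by Lebesgue's density theorem. Moreover each
point of `closure Ω` and of `frontier Ω` is a limit of points of the closures and of the
frontiers of the approximating domains, so a pointwise limit of curves parametrized
proportionally to arc length is again a curve witnessing uniformity.
-/

open scoped Topology ENNReal NNReal

/-! ### Curves of finite length -/

theorem continuousOn_variationOnFromTo {X : Type*} [PseudoEMetricSpace X] {f : ℝ → X} {s : Set ℝ}
    {a : ℝ} (hf : ContinuousOn f s) (hv : BoundedVariationOn f s) (ha : a ∈ s) :
    ContinuousOn (variationOnFromTo f s a) s := by
  intro x hx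
  have hleft := (ENNReal.tendsto_toReal ENNReal.zero_ne_top).comp
    (hv.tendsto_eVariationOn_Icc_zero_left ((hf x hx).mono inter_subset_left))
  have hright := (ENNReal.tendsto_toReal ENNReal.zero_ne_top).comp
    (hv.tendsto_eVariationOn_Icc_zero_right x ((hf x hx).mono inter_subset_left))
  have hsum := hleft.add hright
  simp only [ENNReal.toReal_zero, add_zero] at hsum
  rw [ContinuousWithinAt, tendsto_iff_dist_tendsto_zero]
  refine squeeze_zero' (Eventually.of_forall fun _ => dist_nonneg) ?_ hsum
  filter_upwards [self_mem_nhdsWithin] with y hy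
  have hadd := variationOnFromTo.add hv.locallyBoundedVariationOn ha hx hy
  rw [Real.dist_eq, ← hadd, add_sub_cancel_left, variationOnFromTo]
  have hyx : 0 ≤ (eVariationOn f (s ∩ Icc y x)).toReal := ENNReal.toReal_nonneg
  have hxy : 0 ≤ (eVariationOn f (s ∩ Icc x y)).toReal := ENNReal.toReal_nonneg
  simp only [Function.comp_apply]
  split_ifs
  · rw [abs_of_nonneg hxy]; exact le_add_of_nonneg_left hyx
  · rw [abs_neg, abs_of_nonneg hyx]; exact le_add_of_nonneg_right hxy

theorem lipschitzOnWith_of_hasConstantSpeedOnWith {X : Type*} [PseudoEMetricSpace X] {f : ℝ → X}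
    {s : Set ℝ} {C : ℝ≥0} (hf : HasConstantSpeedOnWith f s C) : LipschitzOnWith C f s := by
  intro x hx y hy
  wlog hxy : x ≤ y generalizing x y
  · simpa only [edist_comm] using this hy hx (le_of_not_ge hxy)
  calc edist (f x) (f y) ≤ eVariationOn f (s ∩ Icc x y) :=
        eVariationOn.edist_le f ⟨hx, left_mem_Icc.2 hxy⟩ ⟨hy, right_mem_Icc.2 hxy⟩
    _ = C * edist x y := by
        rw [hf hx hy, ENNReal.ofReal_mul C.coe_nonneg, ENNReal.ofReal_coe_nnreal, edist_comm,
          edist_dist, Real.dist_eq, abs_of_nonneg (sub_nonneg.2 hxy)]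

theorem eVariationOn_Icc_le_of_lipschitzOnWith {X : Type*} [PseudoEMetricSpace X] {f : ℝ → X}
    {a b : ℝ} {C : ℝ≥0} (hf : LipschitzOnWith C f (Icc a b)) :
    eVariationOn f (Icc a b) ≤ C * ENNReal.ofReal (b - a) := by
  simpa only [Function.comp_id, eVariationOn_id_Icc] using hf.comp_eVariationOn_le (mapsTo_id _)

theorem exists_lipschitzOnWith_reparametrization {X : Type*} [EMetricSpace X] {f : ℝ → X} {a b : ℝ}
    {C : ℝ≥0} (hab : a ≤ b) (hf : ContinuousOn f (Icc a b)) (hv : eVariationOn f (Icc a b) ≤ C) :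
    ∃ g : ℝ → X, LipschitzOnWith C g (Icc 0 1) ∧ g 0 = f a ∧ g 1 = f b ∧
      MapsTo g (Icc 0 1) (f '' Icc a b) := by
  have hbv : BoundedVariationOn f (Icc a b) := ne_top_of_le_ne_top ENNReal.coe_ne_top hv
  have ha : a ∈ Icc a b := left_mem_Icc.2 hab
  set V := variationOnFromTo f (Icc a b) a
  set ψ := naturalParameterization f (Icc a b) a
  have hψ : ∀ t ∈ Icc a b, ψ (V t) = f t := fun t ht =>
    edist_eq_zero.1 (edist_naturalParameterization_eq_zero hbv.locallyBoundedVariationOn ha ht)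
  have hVa : V a = 0 := variationOnFromTo.self _ _ _
  have hVb : 0 ≤ V b := variationOnFromTo.nonneg_of_le _ _ hab
  have hVC : ‖V b‖₊ ≤ C := by
    rw [← NNReal.coe_le_coe, coe_nnnorm, Real.norm_of_nonneg hVb,
      show V b = _ from variationOnFromTo.eq_of_le _ _ hab, inter_self]
    exact ENNReal.toReal_le_coe_of_le_coe hv
  have hscale : MapsTo (fun u => V b * u) (Icc 0 1) (V '' Icc a b) := fun u hu =>
    intermediate_value_Icc hab (continuousOn_variationOnFromTo hf hbv ha)
      ⟨hVa.trans_le (mul_nonneg hVb hu.1), mul_le_of_le_one_right hVb hu.2⟩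
  have hψ_lip : LipschitzOnWith 1 ψ (V '' Icc a b) := lipschitzOnWith_of_hasConstantSpeedOnWith
    (has_unit_speed_naturalParameterization f hbv.locallyBoundedVariationOn ha)
  refine ⟨fun u => ψ (V b * u), ?_, ?_, ?_, fun u hu => ?_⟩
  · exact (hψ_lip.comp (lipschitzWith_smul (V b)).lipschitzOnWith hscale).weaken (by rwa [one_mul])
  · simpa only [mul_zero, hVa] using hψ a ha
  · simpa only [mul_one] using hψ b (right_mem_Icc.2 hab)
  · obtain ⟨t, ht, hVt⟩ := hscale hu
    exact ⟨t, ht, by rw [← hψ t ht, hVt]⟩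

/-! ### Limits along ultrafilters -/

section UltrafilterLimits

variable {ι X : Type*} [PseudoMetricSpace X] [ProperSpace X] {l : Ultrafilter ι}

theorem exists_tendsto_of_eventually_dist_le {p q : ι → X} {x : X} {C : ℝ}
    (hp : Tendsto p l (𝓝 x)) (hpq : ∀ᶠ i in l, dist (q i) (p i) ≤ C) :
    ∃ y, Tendsto q l (𝓝 y) := by
  have hmem : ∀ᶠ i in l, q i ∈ closedBall x (C + 1) := by
    filter_upwards [hpq, hp.eventually (ball_mem_nhds x one_pos)] with i hqp hpx
    exact (dist_triangle _ _ _).trans (add_le_add hqp (mem_ball.1 hpx).le)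
  obtain ⟨y, -, hy⟩ := (isCompact_closedBall x (C + 1)).ultrafilter_le_nhds' (l.map q) hmem
  exact ⟨y, hy⟩

theorem exists_lipschitzOnWith_tendsto {Y : Type*} [PseudoMetricSpace Y] {s : Set Y} {a : Y}
    {g : ι → Y → X} {K : ι → ℝ≥0} {K₀ : ℝ≥0} {x : X} (hg : ∀ i, LipschitzOnWith (K i) (g i) s)
    (hK : Tendsto K l (𝓝 K₀)) (ha : a ∈ s) (hx : Tendsto (fun i => g i a) l (𝓝 x)) :
    ∃ γ : Y → X, LipschitzOnWith K₀ γ s ∧ ∀ u ∈ s, Tendsto (fun i => g i u) l (𝓝 (γ u)) := by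
  have hlim : ∀ u ∈ s, ∃ y, Tendsto (fun i => g i u) l (𝓝 y) := fun u hu => by
    refine exists_tendsto_of_eventually_dist_le (C := (K₀ + 1) * dist u a) hx ?_
    filter_upwards [hK.eventually_lt_const (lt_add_one K₀)] with i hi
    exact ((hg i).dist_le_mul u hu a ha).trans
      (mul_le_mul_of_nonneg_right (by exact_mod_cast hi.le) dist_nonneg)
  have : Nonempty X := ⟨x⟩
  choose! γ hγ using hlim
  refine ⟨γ, LipschitzOnWith.of_dist_le_mul fun u hu v hv => ?_, hγ⟩
  exact le_of_tendsto_of_tendsto' ((hγ u hu).dist (hγ v hv))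
    ((NNReal.tendsto_coe.2 hK).mul_const _) fun i => (hg i).dist_le_mul u hu v hv

end UltrafilterLimits

/-! ### Uniform domains -/

section PseudoMetric

variable {X : Type*} [PseudoMetricSpace X] {M : ℝ} {Ω : Set X} {x₁ x₂ : X} {γ : ℝ → X}

/-- A curve witnessing the `M`-uniformity condition of `Ω` for the endpoints `x₁` and `x₂`. Since
`infDist` to the empty set is `0`, a nonconstant such curve forces `frontier Ω` to be nonempty. -/
structure IsUniformCurve (M : ℝ) (Ω : Set X) (x₁ x₂ : X) (γ : ℝ → X) : Prop where
  continuousOn : ContinuousOn γ (Icc 0 1)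
  source : γ 0 = x₁
  target : γ 1 = x₂
  mem_closure : ∀ t ∈ Icc (0 : ℝ) 1, γ t ∈ closure Ω
  eVariationOn_le : eVariationOn γ (Icc 0 1) ≤ ENNReal.ofReal (M * dist x₁ x₂)
  le_infDist : ∀ t ∈ Icc (0 : ℝ) 1,
    1 / M * min (dist (γ t) x₁) (dist (γ t) x₂) ≤ infDist (γ t) (frontier Ω)

/-- The analogue of `IsMUniform` in an arbitrary metric space. -/
structure IsUniformDomain (M : ℝ) (Ω : Set X) : Prop where
  isOpen : IsOpen Ω
  isConnected : IsConnected Ω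
  exists_curve : ∀ x₁ ∈ closure Ω, ∀ x₂ ∈ closure Ω, ∃ γ, IsUniformCurve M Ω x₁ x₂ γ

theorem isUniformDomain_iff_isMUniform {n : ℕ} {Ω : Set (EuclideanSpace ℝ (Fin n))} :
    IsUniformDomain M Ω ↔ IsMUniform M Ω where
  mp h := ⟨h.isOpen, h.isConnected, fun x₁ hx₁ x₂ hx₂ =>
    let ⟨γ, hγ⟩ := h.exists_curve x₁ hx₁ x₂ hx₂
    ⟨γ, hγ.continuousOn, hγ.source, hγ.target, hγ.mem_closure, hγ.eVariationOn_le, hγ.le_infDist⟩⟩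
  mpr h := ⟨h.1, h.2.1, fun x₁ hx₁ x₂ hx₂ =>
    let ⟨γ, hc, h₀, h₁, hcl, hv, hd⟩ := h.2.2 x₁ hx₁ x₂ hx₂
    ⟨γ, hc, h₀, h₁, hcl, hv, hd⟩⟩

theorem IsUniformCurve.exists_dist_eq (hγ : IsUniformCurve M Ω x₁ x₂ γ) {r : ℝ} (hr₀ : 0 ≤ r)
    (hr : r ≤ dist x₁ x₂) : ∃ t ∈ Icc (0 : ℝ) 1, dist (γ t) x₁ = r := by
  have hcont : ContinuousOn (fun t => dist (γ t) x₁) (Icc 0 1) :=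
    (continuous_id.dist continuous_const).comp_continuousOn hγ.continuousOn
  refine intermediate_value_Icc zero_le_one hcont ⟨?_, ?_⟩
  · rwa [hγ.source, dist_self]
  · rwa [hγ.target, dist_comm]

end PseudoMetric

section Metric

variable {X : Type*} [MetricSpace X] {M : ℝ} {U : Set X} {x₁ x₂ : X} {γ : ℝ → X}

namespace IsUniformCurve

theorem exists_lipschitzOnWith (hγ : IsUniformCurve M U x₁ x₂ γ) :
    ∃ g, IsUniformCurve M U x₁ x₂ g ∧ LipschitzOnWith (M * dist x₁ x₂).toNNReal g (Icc 0 1) := by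
  obtain ⟨g, hlip, hg₀, hg₁, hrange⟩ :=
    exists_lipschitzOnWith_reparametrization zero_le_one hγ.continuousOn hγ.eVariationOn_le
  refine ⟨g, ⟨hlip.continuousOn, hg₀.trans hγ.source, hg₁.trans hγ.target, fun u hu => ?_, ?_,
    fun u hu => ?_⟩, hlip⟩
  · obtain ⟨t, ht, htu⟩ := hrange hu
    exact htu ▸ hγ.mem_closure t ht
  · simpa [ENNReal.ofReal] using eVariationOn_Icc_le_of_lipschitzOnWith hlip
  · obtain ⟨t, ht, htu⟩ := hrange hu
    exact htu ▸ hγ.le_infDist t ht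

theorem mem_of_isOpen (hγ : IsUniformCurve M U x₁ x₂ γ) (hM : 0 < M) (hU : IsOpen U)
    (hx₁ : x₁ ∈ U) (hx₂ : x₂ ∈ U) {t : ℝ} (ht : t ∈ Icc (0 : ℝ) 1) : γ t ∈ U := by
  by_contra hγt
  have hfr : γ t ∈ frontier U := ⟨hγ.mem_closure t ht, by rwa [hU.interior_eq]⟩
  have hd₁ : 0 < dist (γ t) x₁ := dist_pos.2 fun h => hγt (h ▸ hx₁)
  have hd₂ : 0 < dist (γ t) x₂ := dist_pos.2 fun h => hγt (h ▸ hx₂)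
  have hpos : 0 < 1 / M * min (dist (γ t) x₁) (dist (γ t) x₂) := by positivity
  exact (hpos.trans_le (hγ.le_infDist t ht)).ne' (infDist_zero_of_mem hfr)

theorem of_tendsto {ι : Type*} {l : Filter ι} [l.NeBot] {A : ι → Set X} {p q : ι → X} {x y : X}
    {g : ι → ℝ → X} (hg : ∀ i, IsUniformCurve M (A i) (p i) (q i) (g i))
    (hp : Tendsto p l (𝓝 x)) (hq : Tendsto q l (𝓝 y))
    (hlip : LipschitzOnWith (M * dist x y).toNNReal γ (Icc 0 1))
    (hlim : ∀ t ∈ Icc (0 : ℝ) 1, Tendsto (fun i => g i t) l (𝓝 (γ t)))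
    (hclosure : ∀ w z, (∀ i, w i ∈ closure (A i)) → Tendsto w l (𝓝 z) → z ∈ closure U)
    (hne : (frontier U).Nonempty)
    (hfrontier : ∀ z ∈ frontier U, Tendsto (fun i => infDist z (frontier (A i))) l (𝓝 0)) :
    IsUniformCurve M U x y γ where
  continuousOn := hlip.continuousOn
  source := by
    refine tendsto_nhds_unique (hlim 0 (left_mem_Icc.2 zero_le_one)) ?_
    simpa only [(hg _).source] using hp
  target := by
    refine tendsto_nhds_unique (hlim 1 (right_mem_Icc.2 zero_le_one)) ?_
    simpa only [(hg _).target] using hq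
  mem_closure t ht := hclosure _ _ (fun i => (hg i).mem_closure t ht) (hlim t ht)
  eVariationOn_le := by
    simpa [ENNReal.ofReal] using eVariationOn_Icc_le_of_lipschitzOnWith hlip
  le_infDist t ht := by
    refine (Metric.le_infDist hne).2 fun z hz => ?_
    have hleft := (((hlim t ht).dist hp).min ((hlim t ht).dist hq)).const_mul (1 / M)
    have hright := (hfrontier z hz).add ((hlim t ht).dist (tendsto_const_nhds (x := z)))
    rw [zero_add] at hright
    exact le_of_tendsto_of_tendsto' hleft hright fun i =>
      ((hg i).le_infDist t ht).trans infDist_le_infDist_add_dist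

end IsUniformCurve

theorem isConnected_of_forall_exists_isUniformCurve (hM : 0 < M) (hU : IsOpen U)
    (hne : U.Nonempty) (hcurve : ∀ x ∈ U, ∀ y ∈ U, ∃ γ, IsUniformCurve M U x y γ) :
    IsConnected U := by
  refine ⟨hne, isPreconnected_of_forall_pair fun x hx y hy => ?_⟩
  obtain ⟨γ, hγ⟩ := hcurve x hx y hy
  refine ⟨γ '' Icc 0 1, ?_, ⟨0, by simp, hγ.source⟩, ⟨1, by simp, hγ.target⟩,
    isPreconnected_Icc.image γ hγ.continuousOn⟩
  rintro _ ⟨t, ht, rfl⟩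
  exact hγ.mem_of_isOpen hM hU hx hy ht

theorem exists_isUniformCurve_of_tendsto [ProperSpace X] {ι : Type*} {l : Ultrafilter ι}
    {A : ι → Set X} {p q : ι → X} {x y : X} (hA : ∀ i, IsUniformDomain M (A i))
    (hpA : ∀ i, p i ∈ closure (A i)) (hqA : ∀ i, q i ∈ closure (A i))
    (hp : Tendsto p l (𝓝 x)) (hq : Tendsto q l (𝓝 y))
    (hclosure : ∀ w z, (∀ i, w i ∈ closure (A i)) → Tendsto w l (𝓝 z) → z ∈ closure U)
    (hne : (frontier U).Nonempty)
    (hfrontier : ∀ z ∈ frontier U, Tendsto (fun i => infDist z (frontier (A i))) l (𝓝 0)) :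
    ∃ γ, IsUniformCurve M U x y γ := by
  have hcurve : ∀ i, ∃ g, IsUniformCurve M (A i) (p i) (q i) g ∧
      LipschitzOnWith (M * dist (p i) (q i)).toNNReal g (Icc 0 1) := fun i =>
    let ⟨_, hg⟩ := (hA i).exists_curve (p i) (hpA i) (q i) (hqA i)
    hg.exists_lipschitzOnWith
  choose g hg hg_lip using hcurve
  have hspeed : Tendsto (fun i => (M * dist (p i) (q i)).toNNReal) l
      (𝓝 (M * dist x y).toNNReal) :=
    (continuous_real_toNNReal.tendsto _).comp ((hp.dist hq).const_mul M)
  obtain ⟨γ, hlip, hlim⟩ := exists_lipschitzOnWith_tendsto hg_lip hspeed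
    (left_mem_Icc.2 zero_le_one) (by simpa only [(hg _).source] using hp)
  exact ⟨γ, .of_tendsto hg hp hq hlip hlim hclosure hne hfrontier⟩

end Metric

/-! ### Corkscrews and porosity -/

theorem exists_mem_lt_dist_of_lt_ediam {X : Type*} [PseudoMetricSpace X] {s : Set X} {d : ℝ}
    (hd : ENNReal.ofReal (2 * d) < ediam s) (x : X) : ∃ z ∈ s, d < dist x z := by
  by_contra! h
  refine hd.not_ge (ediam_le_of_forall_dist_le fun a ha b hb => ?_)
  linarith [dist_triangle_left a b x, h a ha, h b hb]

theorem subset_interior_of_disjoint_frontier {X : Type*} [TopologicalSpace X] {s t : Set X}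
    (hs : IsPreconnected s) (hst : Disjoint s (frontier t)) (hne : (s ∩ closure t).Nonempty) :
    s ⊆ interior t := by
  have hclosure : s ∩ closure t ⊆ interior t := fun x hx => by
    by_contra hxt
    exact disjoint_left.1 hst hx.1 ⟨hx.2, hxt⟩
  refine hs.subset_left_of_subset_union isOpen_interior isClosed_closure.isOpen_compl
    (disjoint_compl_right.mono_left interior_subset_closure) (fun x hx => ?_)
    (hne.mono fun x hx => ⟨hx.1, hclosure hx⟩)
  by_cases hxt : x ∈ closure t
  · exact Or.inl (hclosure ⟨hx, hxt⟩)
  · exact Or.inr hxt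

theorem ball_infDist_frontier_subset_interior {E : Type*} [SeminormedAddCommGroup E]
    [NormedSpace ℝ E] {s : Set E} {x : E} (hx : x ∈ closure s) :
    ball x (infDist x (frontier s)) ⊆ interior s := by
  rcases (infDist_nonneg (x := x) (s := frontier s)).eq_or_lt with h₀ | hpos
  · rw [← h₀, ball_zero]
    exact empty_subset _
  · exact subset_interior_of_disjoint_frontier (convex_ball _ _).isPreconnected
      disjoint_ball_infDist ⟨x, mem_ball_self hpos, hx⟩

/-- The corkscrew condition of `Ω` at `x`: for every scale `r ≤ r₀` the set `Ω` contains a ball of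
radius `r` centred at distance `K * r` from `x`. -/
def HasCorkscrewAt {X : Type*} [PseudoMetricSpace X] (K r₀ : ℝ) (Ω : Set X) (x : X) : Prop :=
  ∀ r, 0 < r → r ≤ r₀ → ∃ y, dist y x = K * r ∧ ball y r ⊆ Ω

/-- A set is porous if every one of its points sees, at arbitrarily small scales, a hole of the
set whose radius is proportional to the distance of its centre from the point. -/
def IsPorous {X : Type*} [PseudoMetricSpace X] (S : Set X) : Prop :=
  ∃ K : ℝ, ∀ x ∈ S, ∃ᶠ r in 𝓝[>] 0, ∃ y, dist x y ≤ K * r ∧ Disjoint S (closedBall y r)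

namespace HasCorkscrewAt

variable {X : Type*} [PseudoMetricSpace X] {K r₀ : ℝ} {Ω : Set X} {x : X}

theorem mem_closure_interior (h : HasCorkscrewAt K r₀ Ω x) (hr₀ : 0 < r₀) :
    x ∈ closure (interior Ω) := by
  refine Metric.mem_closure_iff.2 fun ε hε => ?_
  have hsmall : ∀ᶠ r in 𝓝[>] (0 : ℝ), K * r < ε :=
    (((continuous_const_mul K).tendsto' 0 0 (mul_zero K)).mono_left
      nhdsWithin_le_nhds).eventually_lt_const hε
  obtain ⟨r, hKr, hr, hrr₀⟩ := (hsmall.and (Ioc_mem_nhdsGT hr₀)).exists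
  obtain ⟨y, hyx, hy⟩ := h r hr hrr₀
  exact ⟨y, interior_maximal hy isOpen_ball (mem_ball_self hr), by rwa [dist_comm, hyx]⟩

theorem isPorous_frontier (h : ∀ x ∈ frontier Ω, HasCorkscrewAt K r₀ Ω x) (hr₀ : 0 < r₀) :
    IsPorous (frontier Ω) := by
  refine ⟨2 * K, fun x hx => Eventually.frequently ?_⟩
  filter_upwards [Ioc_mem_nhdsGT (half_pos hr₀)] with r ⟨hr, hrr₀⟩
  obtain ⟨y, hyx, hy⟩ := h x hx (2 * r) (by positivity) (by linarith)
  refine ⟨y, by rw [dist_comm, hyx]; linarith, disjoint_interior_frontier.symm.mono_right ?_⟩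
  exact (closedBall_subset_ball (by linarith)).trans (interior_maximal hy isOpen_ball)

end HasCorkscrewAt

theorem IsUniformDomain.hasCorkscrewAt {E : Type*} [SeminormedAddCommGroup E] [NormedSpace ℝ E]
    {M c : ℝ} {Ω : Set E} {x : E} (hΩ : IsUniformDomain M Ω) (hM : 0 < M) (hc : 0 < c)
    (hdiam : ENNReal.ofReal c ≤ ediam Ω) (hx : x ∈ closure Ω) :
    HasCorkscrewAt M (c / (8 * M)) Ω x := by
  intro r hr hrc
  have hrc' : 8 * (M * r) ≤ c := by
    rw [le_div_iff₀ (by positivity)] at hrc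
    linarith
  obtain ⟨z, hz, hxz⟩ : ∃ z ∈ Ω, c / 4 < dist x z := by
    refine exists_mem_lt_dist_of_lt_ediam (lt_of_lt_of_le ?_ hdiam) x
    exact (ENNReal.ofReal_lt_ofReal_iff hc).2 (by linarith)
  obtain ⟨γ, hγ⟩ := hΩ.exists_curve x hx z (subset_closure hz)
  obtain ⟨t, ht, htx⟩ := hγ.exists_dist_eq (r := M * r) (by positivity) (by linarith)
  have hnear : dist (γ t) x ≤ dist (γ t) z := by
    linarith [dist_triangle_left x z (γ t)]
  have hr_le : r ≤ infDist (γ t) (frontier Ω) :=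
    calc r = 1 / M * min (dist (γ t) x) (dist (γ t) z) := by
          rw [min_eq_left hnear, htx]; field_simp
      _ ≤ _ := hγ.le_infDist t ht
  refine ⟨γ t, htx, (ball_subset_ball hr_le).trans ?_⟩
  exact (ball_infDist_frontier_subset_interior (hγ.mem_closure t ht)).trans interior_subset

theorem IsUniformDomain.exists_ball_subset {E : Type*} [SeminormedAddCommGroup E] [NormedSpace ℝ E]
    {M c : ℝ} {Ω : Set E} (hΩ : IsUniformDomain M Ω) (hM : 0 < M) (hc : 0 < c)
    (hdiam : ENNReal.ofReal c ≤ ediam Ω) : ∃ y, ball y (c / (8 * M)) ⊆ Ω := by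
  obtain ⟨x, hx⟩ := hΩ.isConnected.nonempty
  obtain ⟨y, -, hy⟩ :=
    hΩ.hasCorkscrewAt hM hc hdiam (subset_closure hx) (c / (8 * M)) (by positivity) le_rfl
  exact ⟨y, hy⟩

theorem IsPorous.measure_eq_zero {X : Type*} [PseudoMetricSpace X] [SecondCountableTopology X]
    [MeasurableSpace X] [BorelSpace X] {μ : Measure X} [IsUnifLocDoublingMeasure μ]
    [IsLocallyFiniteMeasure μ] {S : Set X} (hS : IsPorous S) (hmeas : MeasurableSet S) :
    μ S = 0 := by
  obtain ⟨K, hK⟩ := hS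
  rw [← Measure.restrict_eq_zero, ← ae_eq_bot, ← empty_mem_iff_bot]
  filter_upwards [IsUnifLocDoublingMeasure.ae_tendsto_measure_inter_div μ S K,
    ae_restrict_mem hmeas] with x hdensity hx
  have : Nonempty X := ⟨x⟩
  choose! y hy using fun r (hr : ∃ y, dist x y ≤ K * r ∧ Disjoint S (closedBall y r)) => hr
  set l := 𝓝[>] (0 : ℝ) ⊓ 𝓟 {r | ∃ y, dist x y ≤ K * r ∧ Disjoint S (closedBall y r)}
  have : l.NeBot := frequently_mem_iff_neBot.1 (hK x hx)
  have hhole : ∀ᶠ r in l, dist x (y r) ≤ K * r ∧ Disjoint S (closedBall (y r) r) :=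
    mem_inf_of_right fun r hr => hy r hr
  have hone := hdensity y id (tendsto_id.mono_left inf_le_left) (hhole.mono fun r hr => hr.1)
  have hzero : Tendsto (fun r => μ (S ∩ closedBall (y r) r) / μ (closedBall (y r) r)) l (𝓝 0) := by
    refine tendsto_const_nhds.congr' (hhole.mono fun r hr => ?_)
    simp only [hr.2.inter_eq, measure_empty, ENNReal.zero_div]
  exact one_ne_zero (tendsto_nhds_unique hone hzero)

/-! ### Limits in measure -/

/-- The normalization of a representative of a set modulo null sets: no frontier point is
removable, in that each of its neighbourhoods meets both the set and its complement in positive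
measure. -/
def HasEssentialFrontier {X : Type*} [TopologicalSpace X] [MeasurableSpace X] (μ : Measure X)
    (Ω : Set X) : Prop :=
  ∀ x ∈ frontier Ω, ∀ U ∈ 𝓝 x, μ (U ∩ Ω) ≠ 0 ∧ μ (U \ Ω) ≠ 0

namespace HasEssentialFrontier

variable {X : Type*} [TopologicalSpace X] [MeasurableSpace X] {μ : Measure X}
  [μ.IsOpenPosMeasure] {Ω U : Set X}

theorem measure_inter_ne_zero (hΩ : HasEssentialFrontier μ Ω) {x : X} (hx : x ∈ closure Ω)
    (hU : U ∈ 𝓝 x) : μ (U ∩ Ω) ≠ 0 := by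
  by_cases hxi : x ∈ interior Ω
  · exact (Measure.measure_pos_of_mem_nhds μ (inter_mem hU (mem_interior_iff_mem_nhds.1 hxi))).ne'
  · exact (hΩ x ⟨hx, hxi⟩ U hU).1

theorem subset_interior (hΩ : HasEssentialFrontier μ Ω) (hU : IsOpen U) (hUc : IsPreconnected U)
    (h₀ : μ (U \ Ω) = 0) : U ⊆ interior Ω := by
  rcases U.eq_empty_or_nonempty with rfl | hne
  · exact empty_subset _
  have hmeets : (U ∩ Ω).Nonempty := by
    by_contra hempty
    rw [not_nonempty_iff_eq_empty, ← disjoint_iff_inter_eq_empty] at hempty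
    exact hU.measure_ne_zero μ hne (hempty.sdiff_eq_left ▸ h₀)
  exact subset_interior_of_disjoint_frontier hUc
    (disjoint_left.2 fun x hxU hx => (hΩ x hx U (hU.mem_nhds hxU)).2 h₀)
    (hmeets.mono (inter_subset_inter_right U subset_closure))

end HasEssentialFrontier

section SymmDiff

variable {ι X : Type*} [MeasurableSpace X] {μ : Measure X} {l : Filter ι} {A : ι → Set X}
  {s Ω : Set X}

theorem measure_diff_eq_zero_of_frequently_subset
    (hconv : Tendsto (fun i => μ (symmDiff (A i) Ω)) l (𝓝 0)) (hs : ∃ᶠ i in l, s ⊆ A i) :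
    μ (s \ Ω) = 0 := by
  by_contra hpos
  obtain ⟨i, hsi, hi⟩ :=
    (hs.and_eventually (hconv.eventually_lt_const (pos_iff_ne_zero.2 hpos))).exists
  exact hi.not_ge (measure_mono fun x hx => Or.inl ⟨hsi hx.1, hx.2⟩)

theorem measure_inter_eq_zero_of_frequently_disjoint
    (hconv : Tendsto (fun i => μ (symmDiff (A i) Ω)) l (𝓝 0)) (hs : ∃ᶠ i in l, Disjoint s (A i)) :
    μ (s ∩ Ω) = 0 := by
  by_contra hpos
  obtain ⟨i, hsi, hi⟩ :=
    (hs.and_eventually (hconv.eventually_lt_const (pos_iff_ne_zero.2 hpos))).exists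
  exact hi.not_ge (measure_mono fun x hx => Or.inr ⟨hx.2, disjoint_left.1 hsi hx.1⟩)

theorem eventually_inter_nonempty [TopologicalSpace X] [μ.IsOpenPosMeasure]
    (hconv : Tendsto (fun i => μ (symmDiff (A i) Ω)) l (𝓝 0)) (hΩ : HasEssentialFrontier μ Ω)
    {x : X} (hx : x ∈ closure Ω) {U : Set X} (hU : U ∈ 𝓝 x) :
    ∀ᶠ i in l, (U ∩ A i).Nonempty := by
  by_contra h
  refine hΩ.measure_inter_ne_zero hx hU (measure_inter_eq_zero_of_frequently_disjoint hconv ?_)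
  simpa only [not_eventually, not_nonempty_iff_eq_empty, disjoint_iff_inter_eq_empty] using h

end SymmDiff

theorem tendsto_infDist_zero {ι X : Type*} [PseudoMetricSpace X] {l : Filter ι} {s : ι → Set X}
    {x : X} (h : ∀ U ∈ 𝓝 x, ∀ᶠ i in l, (U ∩ s i).Nonempty) :
    Tendsto (fun i => infDist x (s i)) l (𝓝 0) := by
  refine Metric.tendsto_nhds.2 fun ε hε => ?_
  filter_upwards [h (ball x ε) (ball_mem_nhds x hε)] with i ⟨z, hzx, hz⟩
  rw [Real.dist_0_eq_abs, abs_of_nonneg infDist_nonneg]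
  exact (infDist_le_dist_of_mem hz).trans_lt (mem_ball'.1 hzx)

theorem exists_tendsto_mem_closure {ι X : Type*} [PseudoMetricSpace X] [ProperSpace X]
    {l : Filter ι} {s : ι → Set X} {x : X} (hs : ∀ i, (s i).Nonempty)
    (h : Tendsto (fun i => infDist x (s i)) l (𝓝 0)) :
    ∃ p : ι → X, (∀ i, p i ∈ closure (s i)) ∧ Tendsto p l (𝓝 x) := by
  choose p hp hpx using fun i => exists_mem_closure_infDist_eq_dist (hs i) x
  refine ⟨p, hp, tendsto_iff_dist_tendsto_zero.2 ?_⟩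
  simpa only [dist_comm, ← hpx] using h

section NormedSpace

variable {ι E : Type*} [NormedAddCommGroup E] [NormedSpace ℝ E] [MeasurableSpace E]
  {μ : Measure E} [μ.IsOpenPosMeasure] {A : ι → Set E} {Ω : Set E}

theorem tendsto_infDist_frontier {l : Filter ι}
    (hconv : Tendsto (fun i => μ (symmDiff (A i) Ω)) l (𝓝 0)) (hΩ : HasEssentialFrontier μ Ω)
    {x : E} (hx : x ∈ frontier Ω) : Tendsto (fun i => infDist x (frontier (A i))) l (𝓝 0) := by
  refine tendsto_infDist_zero fun U hU => ?_
  obtain ⟨r, hr, hrU⟩ := Metric.mem_nhds_iff.1 hU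
  have hball := ball_mem_nhds x hr
  have hnot_subset : ∀ᶠ i in l, ¬ ball x r ⊆ A i := not_frequently.1 fun h =>
    (hΩ x hx _ hball).2 (measure_diff_eq_zero_of_frequently_subset hconv h)
  filter_upwards [eventually_inter_nonempty hconv hΩ hx.1 hball, hnot_subset] with i hmeets hi
  by_contra hempty
  rw [not_nonempty_iff_eq_empty, ← disjoint_iff_inter_eq_empty] at hempty
  exact hi ((subset_interior_of_disjoint_frontier (convex_ball x r).isPreconnected
    (hempty.mono_left hrU) (hmeets.mono (inter_subset_inter_right _ subset_closure))).trans
    interior_subset)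

theorem HasCorkscrewAt.of_tendsto [ProperSpace E] {l : Ultrafilter ι} {K r₀ : ℝ} {p : ι → E} {x : E}
    (hconv : Tendsto (fun i => μ (symmDiff (A i) Ω)) l (𝓝 0)) (hΩ : HasEssentialFrontier μ Ω)
    (hA : ∀ i, HasCorkscrewAt K r₀ (A i) (p i)) (hp : Tendsto p l (𝓝 x)) :
    HasCorkscrewAt K r₀ Ω x := by
  intro r hr hrr₀
  choose q hqp hqA using fun i => hA i r hr hrr₀
  obtain ⟨y, hy⟩ := exists_tendsto_of_eventually_dist_le hp (.of_forall fun i => (hqp i).le)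
  refine ⟨y, tendsto_nhds_unique (hy.dist hp) (by simp only [hqp, tendsto_const_nhds]), ?_⟩
  intro z hz
  obtain ⟨ρ, hzρ, hρr⟩ := exists_between (mem_ball.1 hz)
  have hsubset : ∀ᶠ i in l, ball y ρ ⊆ A i := by
    filter_upwards [hy.eventually (ball_mem_nhds y (sub_pos.2 hρr))] with i hi
    refine (ball_subset_ball' ?_).trans (hqA i)
    linarith [mem_ball'.1 hi]
  exact interior_subset (hΩ.subset_interior isOpen_ball (convex_ball y ρ).isPreconnected
    (measure_diff_eq_zero_of_frequently_subset hconv hsubset.frequently) hzρ)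

end NormedSpace

theorem nonempty_frontier_of_tendsto {ι E : Type*} [NormedAddCommGroup E] [NormedSpace ℝ E]
    [FiniteDimensional ℝ E] [Nontrivial E] [MeasurableSpace E] [BorelSpace E] {μ : Measure E}
    [μ.IsAddHaarMeasure] {l : Filter ι} [l.NeBot] {A : ι → Set E} {Ω : Set E} {r : ℝ}
    (hconv : Tendsto (fun i => μ (symmDiff (A i) Ω)) l (𝓝 0)) (hfin : ∀ i, μ (A i) ≠ ⊤)
    (hr : 0 < r) (hball : ∀ i, ∃ y, ball y r ⊆ A i) : (frontier Ω).Nonempty := by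
  refine nonempty_frontier_iff.2 ⟨nonempty_iff_ne_empty.2 ?_, ?_⟩
  · rintro rfl
    obtain ⟨i, hi⟩ := (hconv.eventually_lt_const (measure_ball_pos μ (0 : E) hr)).exists
    obtain ⟨y, hy⟩ := hball i
    refine hi.not_ge ?_
    calc μ (ball 0 r) = μ (ball y r) := (Measure.addHaar_ball_center μ y r).symm
      _ ≤ μ (symmDiff (A i) ∅) := measure_mono (hy.trans_eq (symmDiff_bot (A i)).symm)
  · rintro rfl
    obtain ⟨i, hi⟩ := (hconv.eventually_lt_const ENNReal.zero_lt_top).exists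
    have : NoncompactSpace E := NormedSpace.noncompactSpace ℝ E
    refine (measure_univ_of_isAddLeftInvariant μ).not_lt ?_
    calc μ univ ≤ μ (A i) + μ (A i)ᶜ := measure_univ_le_add_compl (A i)
      _ ≤ μ (A i) + μ (symmDiff (A i) univ) := by
          gcongr
          exact fun x hx => Or.inr ⟨trivial, hx⟩
      _ < ⊤ := ENNReal.add_lt_top.2 ⟨(hfin i).lt_top, hi⟩

theorem hasEssentialFrontier_of_measure_inter_ball {X : Type*} [PseudoMetricSpace X]
    [MeasurableSpace X] {μ : Measure X} {Ω : Set X}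
    (h : ∀ x ∈ frontier Ω, ∀ r : ℝ, 0 < r →
      0 < μ (Ω ∩ ball x r) ∧ μ (Ω ∩ ball x r) < μ (ball x r)) : HasEssentialFrontier μ Ω := by
  intro x hx U hU
  obtain ⟨r, hr, hrU⟩ := Metric.mem_nhds_iff.1 hU
  obtain ⟨hpos, hlt⟩ := h x hx r hr
  rw [inter_comm] at hpos hlt
  refine ⟨(hpos.trans_le (measure_mono (inter_subset_inter_left Ω hrU))).ne', fun h₀ => ?_⟩
  refine hlt.not_ge ((measure_le_inter_add_sdiff μ (ball x r) Ω).trans_eq ?_)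
  rw [measure_mono_null (sdiff_subset_sdiff_left hrU) h₀, add_zero]

theorem ofReal_toReal_measure_unitBall_mul_pow {E : Type*} [NormedAddCommGroup E]
    [NormedSpace ℝ E] [FiniteDimensional ℝ E] [MeasurableSpace E] [BorelSpace E] (μ : Measure E)
    [μ.IsAddHaarMeasure] (x : E) {r : ℝ} (hr : 0 < r) :
    ENNReal.ofReal ((μ (ball 0 1)).toReal * r ^ Module.finrank ℝ E) = μ (ball x r) := by
  rw [Measure.addHaar_ball_of_pos μ x hr, ENNReal.ofReal_mul ENNReal.toReal_nonneg,
    ENNReal.ofReal_toReal measure_ball_lt_top.ne, mul_comm]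

theorem limit_of_MUniform_domains_general {ι E : Type*} [NormedAddCommGroup E] [NormedSpace ℝ E]
    [ProperSpace E] [MeasurableSpace E] [BorelSpace E] {μ : Measure E}
    [IsUnifLocDoublingMeasure μ] [IsLocallyFiniteMeasure μ] [μ.IsOpenPosMeasure] {l : Filter ι}
    [l.NeBot] {M c : ℝ} (hM : 0 < M) (hc : 0 < c) {A : ι → Set E} {Ω : Set E}
    (hA : ∀ i, IsUniformDomain M (A i)) (hdiam : ∀ i, ENNReal.ofReal c ≤ ediam (A i))
    (hconv : Tendsto (fun i => μ (symmDiff (A i) Ω)) l (𝓝 0)) (hΩ : HasEssentialFrontier μ Ω)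
    (hne : (frontier Ω).Nonempty) :
    (interior Ω).Nonempty ∧ IsUniformDomain M (interior Ω) ∧ μ (Ω \ interior Ω) = 0 ∧
      Tendsto (fun i => μ (symmDiff (A i) (interior Ω))) l (𝓝 0) := by
  let 𝒰 := Ultrafilter.of l
  have hconv' : Tendsto (fun i => μ (symmDiff (A i) Ω)) 𝒰 (𝓝 0) :=
    hconv.mono_left (Ultrafilter.of_le l)
  have hr₀ : 0 < c / (8 * M) := by positivity
  have hcorkscrew : ∀ p x, (∀ i, p i ∈ closure (A i)) → Tendsto p 𝒰 (𝓝 x) →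
      HasCorkscrewAt M (c / (8 * M)) Ω x := fun p x hp hpx =>
    .of_tendsto hconv' hΩ (fun i => (hA i).hasCorkscrewAt hM hc (hdiam i) (hp i)) hpx
  have happrox : ∀ x ∈ closure Ω, ∃ p : ι → E, (∀ i, p i ∈ closure (A i)) ∧ Tendsto p 𝒰 (𝓝 x) :=
    fun x hx => exists_tendsto_mem_closure (fun i => (hA i).isConnected.nonempty)
      (tendsto_infDist_zero fun _ => eventually_inter_nonempty hconv' hΩ hx)
  have hcork : ∀ x ∈ closure Ω, HasCorkscrewAt M (c / (8 * M)) Ω x := fun x hx =>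
    let ⟨p, hp, hpx⟩ := happrox x hx
    hcorkscrew p x hp hpx
  have hnull : μ (frontier Ω) = 0 := (HasCorkscrewAt.isPorous_frontier
    (fun x hx => hcork x hx.1) hr₀).measure_eq_zero isClosed_frontier.measurableSet
  have hint : (interior Ω).Nonempty := closure_nonempty_iff.1
    (hne.mono fun x hx => (hcork x hx.1).mem_closure_interior hr₀)
  have hfrontier : (frontier (interior Ω)).Nonempty :=
    nonempty_frontier_iff.2 ⟨hint, fun h =>
      (nonempty_frontier_iff.1 hne).2 (interior_eq_univ.1 h)⟩
  have hcurve : ∀ x ∈ closure (interior Ω), ∀ y ∈ closure (interior Ω),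
      ∃ γ, IsUniformCurve M (interior Ω) x y γ := by
    intro x hx y hy
    obtain ⟨p, hp, hpx⟩ := happrox x (closure_mono interior_subset hx)
    obtain ⟨q, hq, hqy⟩ := happrox y (closure_mono interior_subset hy)
    exact exists_isUniformCurve_of_tendsto hA hp hq hpx hqy
      (fun w z hw hwz => (hcorkscrew w z hw hwz).mem_closure_interior hr₀) hfrontier
      fun z hz => tendsto_infDist_frontier hconv' hΩ (frontier_interior_subset hz)
  have hae : interior Ω =ᵐ[μ] Ω := interior_ae_eq_of_null_frontier hnull
  refine ⟨hint, ⟨isOpen_interior, ?_, hcurve⟩, ae_le_set.1 hae.symm.le, ?_⟩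
  · exact isConnected_of_forall_exists_isUniformCurve hM isOpen_interior hint fun x hx y hy =>
      hcurve x (subset_closure hx) y (subset_closure hy)
  · exact hconv.congr fun i => measure_congr (ae_eq_set_symmDiff (ae_eq_refl _) hae.symm)

theorem limit_of_MUniform_domains (n : ℕ) (M R c : ℝ) (hM : 1 < M) (hR : 0 < R)
    (hc : 0 < c)
    (Ωi : ℕ → Set (EuclideanSpace ℝ (Fin n))) (Ω : Set (EuclideanSpace ℝ (Fin n)))
    (hsub : ∀ i, Ωi i ⊆ Metric.ball 0 R)
    (huni : ∀ i, IsMUniform M (Ωi i))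
    (hdiam : ∀ i, c ≤ Metric.diam (Ωi i))
    (hmeasΩ : MeasurableSet Ω)
    (hconv : Tendsto (fun i => volume (symmDiff (Ωi i) Ω)) atTop (nhds 0))
    (hnorm : ∀ x ∈ frontier Ω, ∀ r : ℝ, 0 < r →
      0 < volume (Ω ∩ Metric.ball x r) ∧
      volume (Ω ∩ Metric.ball x r) <
        ENNReal.ofReal
          ((volume (Metric.ball (0 : EuclideanSpace ℝ (Fin n)) 1)).toReal * r ^ n)) :
    (interior Ω).Nonempty ∧ IsMUniform M (interior Ω) ∧
    volume (Ω \ interior Ω) = 0 ∧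
    Tendsto (fun i => volume (symmDiff (Ωi i) (interior Ω))) atTop (nhds 0) := by
  have hM₀ : 0 < M := one_pos.trans hM
  have huniform : ∀ i, IsUniformDomain M (Ωi i) := fun i =>
    isUniformDomain_iff_isMUniform.2 (huni i)
  have hediam : ∀ i, ENNReal.ofReal c ≤ ediam (Ωi i) := fun i =>
    ENNReal.ofReal_le_of_le_toReal (hdiam i)
  have hessential : HasEssentialFrontier volume Ω :=
    hasEssentialFrontier_of_measure_inter_ball fun x hx r hr => by
      simpa only [← ofReal_toReal_measure_unitBall_mul_pow volume x hr,
        finrank_euclideanSpace_fin] using hnorm x hx r hr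
  have : Nontrivial (EuclideanSpace ℝ (Fin n)) :=
    nontrivial_of_nontrivial (ediam_pos_iff.1 ((ENNReal.ofReal_pos.2 hc).trans_le (hediam 0)))
  have hfrontier : (frontier Ω).Nonempty :=
    nonempty_frontier_of_tendsto hconv
      (fun i => ((measure_mono (hsub i)).trans_lt measure_ball_lt_top).ne) (by positivity)
      fun i => (huniform i).exists_ball_subset hM₀ hc (hediam i)
  simpa only [isUniformDomain_iff_isMUniform] using
    limit_of_MUniform_domains_general hM₀ hc huniform hediam hconv hessential hfrontier
end

section
/- (Uniform Poincaré inequality for M-uniform domains) Let M > 1, R > 0. There exists a constant C = C(M, R, n) such that for every M-uniform domain Ω ⊆ B_R and every u ∈ H¹(Ω) with ∫_Ω u dx = 0, one has ∫_Ω u² dx ≤ C ∫_Ω |∇u|² dx. -/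
open MeasureTheory Metric Set

/-!
Fix a base point `x₀` deep inside `Ω`. The cigar condition supplies, for every `x ∈ Ω` and every
scale `r ≤ diam Ω`, a point `z` with `dist z x ≤ r` whose distance to the boundary is comparable
to `r`, and it joins the points for `r` and `r / 2` by a curve of length `≲ r` inside a tube of
radius `≳ r`. Walking along the curve in boundedly many steps, the Poincaré inequality on balls
shows that the means of `u` near the two points differ by
`≲ (r ^ (2 - n) ∫_{B(x, Cr) ∩ Ω} |∇u|²) ^ (1 / 2)`. Telescoping over `r = diam Ω / 2 ^ k`, so that
the means run from a fixed mean `c` near `x₀` to `u x`, and applying Cauchy–Schwarz with weights `r`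
gives `|u x - c|² ≲ diam Ω * ∑_r r ^ (1 - n) ∫_{B(x, Cr) ∩ Ω} |∇u|²`. By Tonelli, integrating the
term of scale `r` over `x ∈ Ω` yields `≲ r ∫_Ω |∇u|²`, and the scales sum to `≲ diam Ω`.
-/

open Filter
open scoped ENNReal Topology

section CauchySchwarz

variable {α ι : Type*} [MeasurableSpace α] {μ : Measure α}

theorem rpow_inv_two_sq (a : ℝ≥0∞) : (a ^ (2⁻¹ : ℝ)) ^ 2 = a := by
  rw [← ENNReal.rpow_two, ENNReal.rpow_inv_rpow two_ne_zero]

theorem lintegral_mul_sq_le {f g : α → ℝ≥0∞} (hf : AEMeasurable f μ) (hg : AEMeasurable g μ) :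
    (∫⁻ x, f x * g x ∂μ) ^ 2 ≤ (∫⁻ x, f x ^ 2 ∂μ) * ∫⁻ x, g x ^ 2 ∂μ := by
  have holder := ENNReal.lintegral_mul_le_Lp_mul_Lq μ Real.HolderConjugate.two_two hf hg
  simp only [Pi.mul_apply, ENNReal.rpow_two, one_div] at holder
  calc (∫⁻ x, f x * g x ∂μ) ^ 2
      ≤ ((∫⁻ x, f x ^ 2 ∂μ) ^ (2⁻¹ : ℝ) * (∫⁻ x, g x ^ 2 ∂μ) ^ (2⁻¹ : ℝ)) ^ 2 := by gcongr
    _ = (∫⁻ x, f x ^ 2 ∂μ) * ∫⁻ x, g x ^ 2 ∂μ := by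
        rw [mul_pow, rpow_inv_two_sq, rpow_inv_two_sq]

theorem lintegral_sq_le_measure_univ_mul {f : α → ℝ≥0∞} (hf : AEMeasurable f μ) :
    (∫⁻ x, f x ∂μ) ^ 2 ≤ μ univ * ∫⁻ x, f x ^ 2 ∂μ := by
  simpa using lintegral_mul_sq_le (f := fun _ ↦ 1) aemeasurable_const hf

theorem tsum_sq_le_tsum_mul_tsum_of_sq_le_mul {d f g : ι → ℝ≥0∞}
    (h : ∀ i, d i ^ 2 ≤ f i * g i) : (∑' i, d i) ^ 2 ≤ (∑' i, f i) * ∑' i, g i := by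
  let _ : MeasurableSpace ι := ⊤
  have cauchy_schwarz := lintegral_mul_sq_le (μ := Measure.count)
    (f := fun i ↦ f i ^ (2⁻¹ : ℝ)) (g := fun i ↦ g i ^ (2⁻¹ : ℝ))
    (measurable_from_top.aemeasurable) (measurable_from_top.aemeasurable)
  simp only [lintegral_count, rpow_inv_two_sq] at cauchy_schwarz
  refine le_trans ?_ cauchy_schwarz
  gcongr with i
  rw [← ENNReal.mul_rpow_of_nonneg _ _ (by positivity), ENNReal.le_rpow_inv_iff two_pos,
    ENNReal.rpow_two]
  exact h i

end CauchySchwarz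

section Average

variable {α F : Type*} [MeasurableSpace α] {μ : Measure α} [NormedAddCommGroup F] {f : α → F}

theorem ofReal_integral_norm_sq_eq_lintegral_enorm_sq (hf : Integrable (fun x ↦ ‖f x‖ ^ 2) μ) :
    ENNReal.ofReal (∫ x, ‖f x‖ ^ 2 ∂μ) = ∫⁻ x, ‖f x‖ₑ ^ 2 ∂μ := by
  simpa using ofReal_integral_norm_eq_lintegral_enorm hf

theorem memLp_two_of_lintegral_enorm_sub_sq_lt_top [IsFiniteMeasure μ] {c : F}
    (hf : AEStronglyMeasurable f μ) (h : ∫⁻ x, ‖f x - c‖ₑ ^ 2 ∂μ < ∞) : MemLp f 2 μ := by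
  have hsub : MemLp (fun x ↦ f x - c) 2 μ := by
    refine ⟨hf.sub aestronglyMeasurable_const, ?_⟩
    rw [eLpNorm_lt_top_iff_lintegral_rpow_enorm_lt_top two_ne_zero ENNReal.ofNat_ne_top]
    simpa using h
  simpa [Pi.add_def] using hsub.add (memLp_const c)

variable [NormedSpace ℝ F] [CompleteSpace F] {A B : Set α}

theorem enorm_sub_setAverage_sq_le (c : F) (hf : IntegrableOn f A μ) (hA₀ : μ A ≠ 0)
    (hA : μ A ≠ ∞) : ‖c - ⨍ x in A, f x ∂μ‖ₑ ^ 2 ≤ ⨍⁻ x in A, ‖c - f x‖ₑ ^ 2 ∂μ := by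
  set P : Measure α := (μ A)⁻¹ • μ.restrict A with hP
  have : IsProbabilityMeasure P := ⟨by simp [hP, ENNReal.inv_mul_cancel hA₀ hA]⟩
  have hfP : Integrable f P := hf.integrable.smul_measure (ENNReal.inv_ne_top.2 hA₀)
  rw [setAverage_eq', setLAverage_eq']
  calc ‖c - ∫ x, f x ∂P‖ₑ ^ 2 = ‖∫ x, (c - f x) ∂P‖ₑ ^ 2 := by
        rw [integral_sub (integrable_const c) hfP, integral_const, probReal_univ, one_smul]
    _ ≤ (∫⁻ x, ‖c - f x‖ₑ ∂P) ^ 2 := by gcongr; exact enorm_integral_le_lintegral_enorm _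
    _ ≤ P univ * ∫⁻ x, ‖c - f x‖ₑ ^ 2 ∂P :=
        lintegral_sq_le_measure_univ_mul ((integrable_const c).sub hfP).aestronglyMeasurable.enorm
    _ = ∫⁻ x, ‖c - f x‖ₑ ^ 2 ∂P := by rw [measure_univ, one_mul]

theorem enorm_setAverage_sub_setAverage_sq_le (hfA : IntegrableOn f A μ) (hA₀ : μ A ≠ 0)
    (hA : μ A ≠ ∞) (hfB : IntegrableOn f B μ) (hB₀ : μ B ≠ 0) (hB : μ B ≠ ∞) :
    ‖(⨍ x in A, f x ∂μ) - ⨍ y in B, f y ∂μ‖ₑ ^ 2 ≤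
      ⨍⁻ x in A, ⨍⁻ y in B, ‖f x - f y‖ₑ ^ 2 ∂μ ∂μ := by
  rw [enorm_sub_rev]
  refine (enorm_sub_setAverage_sq_le _ hfA hA₀ hA).trans ?_
  rw [setLAverage_eq', setLAverage_eq']
  refine lintegral_mono fun x ↦ ?_
  rw [enorm_sub_rev]
  exact enorm_sub_setAverage_sq_le _ hfB hB₀ hB

theorem lintegral_enorm_sub_setAverage_sq_le (c : F) (hf : IntegrableOn f A μ) (hA : μ A ≠ ∞) :
    ∫⁻ x in A, ‖f x - ⨍ y in A, f y ∂μ‖ₑ ^ 2 ∂μ ≤ 4 * ∫⁻ x in A, ‖f x - c‖ₑ ^ 2 ∂μ := by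
  rcases eq_or_ne (μ A) 0 with hA₀ | hA₀
  · simp [Measure.restrict_eq_zero.2 hA₀]
  set D := ∫⁻ x in A, ‖f x - c‖ₑ ^ 2 ∂μ with hD
  set a := ⨍ y in A, f y ∂μ
  have mean_close : μ A * ‖c - a‖ₑ ^ 2 ≤ D := by
    have := enorm_sub_setAverage_sq_le c hf hA₀ hA
    rw [setLAverage_eq, ENNReal.le_div_iff_mul_le (.inl hA₀) (.inl hA)] at this
    simpa only [mul_comm, hD, enorm_sub_rev c (f _)] using this
  have add_sq_le (s t : ℝ≥0∞) : (s + t) ^ 2 ≤ 2 * (s ^ 2 + t ^ 2) := by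
    simpa [show (2 : ℝ≥0∞) ^ ((2 : ℝ) - 1) = 2 by norm_num] using
      ENNReal.rpow_add_le_mul_rpow_add_rpow s t one_le_two
  calc ∫⁻ x in A, ‖f x - a‖ₑ ^ 2 ∂μ
      ≤ ∫⁻ x in A, 2 * (‖f x - c‖ₑ ^ 2 + ‖c - a‖ₑ ^ 2) ∂μ := by
        gcongr with x
        calc ‖f x - a‖ₑ ^ 2 = ‖(f x - c) + (c - a)‖ₑ ^ 2 := by rw [sub_add_sub_cancel]
          _ ≤ (‖f x - c‖ₑ + ‖c - a‖ₑ) ^ 2 := by gcongr; exact enorm_add_le _ _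
          _ ≤ 2 * (‖f x - c‖ₑ ^ 2 + ‖c - a‖ₑ ^ 2) := add_sq_le _ _
    _ = 2 * (D + μ A * ‖c - a‖ₑ ^ 2) := by
        rw [lintegral_const_mul' _ _ (by finiteness), lintegral_add_right _ measurable_const,
          setLIntegral_const, mul_comm (μ A)]
    _ ≤ 2 * (D + D) := by gcongr
    _ = 4 * D := by ring

theorem memLp_two_and_setIntegral_norm_sub_setAverage_sq_le {c : F} {K : ℝ} (hA : μ A ≠ ∞)
    (hf : AEStronglyMeasurable f (μ.restrict A)) (hK : 0 ≤ K)
    (h : ∫⁻ x in A, ‖f x - c‖ₑ ^ 2 ∂μ ≤ ENNReal.ofReal K) :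
    MemLp f 2 (μ.restrict A) ∧ ∫ x in A, ‖f x - ⨍ y in A, f y ∂μ‖ ^ 2 ∂μ ≤ 4 * K := by
  have : IsFiniteMeasure (μ.restrict A) := isFiniteMeasure_restrict.2 hA
  have hfLp := memLp_two_of_lintegral_enorm_sub_sq_lt_top hf (h.trans_lt ENNReal.ofReal_lt_top)
  refine ⟨hfLp, ?_⟩
  have hint := (memLp_two_iff_integrable_sq_norm (hf.sub aestronglyMeasurable_const)).1
    (hfLp.sub (memLp_const (⨍ y in A, f y ∂μ)))
  rw [← ENNReal.ofReal_le_ofReal_iff (by positivity), ENNReal.ofReal_mul (by norm_num),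
    ENNReal.ofReal_ofNat]
  calc ENNReal.ofReal (∫ x in A, ‖f x - ⨍ y in A, f y ∂μ‖ ^ 2 ∂μ)
      = ∫⁻ x in A, ‖f x - ⨍ y in A, f y ∂μ‖ₑ ^ 2 ∂μ :=
        ofReal_integral_norm_sq_eq_lintegral_enorm_sq hint
    _ ≤ 4 * ∫⁻ x in A, ‖f x - c‖ₑ ^ 2 ∂μ :=
        lintegral_enorm_sub_setAverage_sq_le c (hfLp.integrable one_le_two) hA
    _ ≤ 4 * ENNReal.ofReal K := by gcongr

theorem tendsto_setAverage_of_continuousAt [TopologicalSpace α] {ι : Type*} {l : Filter ι}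
    {s : ι → Set α} {a : α} (hf : ContinuousAt f a) (hs : Tendsto s l (𝓝 a).smallSets)
    (hs₀ : ∀ i, μ (s i) ≠ 0) (hs_top : ∀ i, μ (s i) ≠ ∞) (hms : ∀ i, MeasurableSet (s i))
    (hint : ∀ i, IntegrableOn f (s i) μ) :
    Tendsto (fun i ↦ ⨍ x in s i, f x ∂μ) l (𝓝 (f a)) := by
  refine Metric.nhds_basis_closedBall.tendsto_right_iff.2 fun ε hε ↦ ?_
  have hpre : f ⁻¹' closedBall (f a) ε ∈ 𝓝 a := hf (closedBall_mem_nhds _ hε)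
  filter_upwards [tendsto_smallSets_iff.1 hs _ hpre] with i hi
  exact (convex_closedBall _ _).set_average_mem isClosed_closedBall (hs₀ i) (hs_top i)
    (ae_restrict_of_forall_mem (hms i) hi) (hint i)

end Average

theorem lintegral_lintegral_lintegral_rotate {α β γ : Type*} [MeasurableSpace α]
    [MeasurableSpace β] [MeasurableSpace γ] (μ : Measure α) (ν : Measure β) (ρ : Measure γ)
    [SFinite μ] [SFinite ν] [SFinite ρ] {H : α → β → γ → ℝ≥0∞}
    (hH : Measurable fun p : (α × β) × γ ↦ H p.1.1 p.1.2 p.2) :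
    ∫⁻ x, ∫⁻ y, ∫⁻ z, H x y z ∂ρ ∂ν ∂μ = ∫⁻ z, ∫⁻ x, ∫⁻ y, H x y z ∂ν ∂μ ∂ρ := by
  have swap_inner (x : α) : ∫⁻ y, ∫⁻ z, H x y z ∂ρ ∂ν = ∫⁻ z, ∫⁻ y, H x y z ∂ν ∂ρ :=
    lintegral_lintegral_swap
      (hH.comp (f := fun p : β × γ ↦ ((x, p.1), p.2)) (by fun_prop)).aemeasurable
  have hmeas : Measurable fun p : (α × γ) × β ↦ H p.1.1 p.2 p.1.2 :=
    hH.comp (f := fun p : (α × γ) × β ↦ ((p.1.1, p.2), p.1.2)) (by fun_prop)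
  simp only [swap_inner]
  exact lintegral_lintegral_swap hmeas.lintegral_prod_right'.aemeasurable

section ConvexPoincare

variable {E F : Type*} [NormedAddCommGroup E] [NormedSpace ℝ E] [NormedAddCommGroup F]
  [NormedSpace ℝ F] [CompleteSpace F]

theorem enorm_sub_le_lintegral_enorm_deriv {g : ℝ → F} {a b : ℝ} (hab : a ≤ b)
    (hg : ∀ t ∈ Icc a b, DifferentiableAt ℝ g t) :
    ‖g b - g a‖ₑ ≤ ∫⁻ t in Icc a b, ‖deriv g t‖ₑ := by
  rcases eq_or_ne (∫⁻ t in Icc a b, ‖deriv g t‖ₑ) ∞ with htop | hfin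
  · exact htop ▸ le_top
  have hint : IntegrableOn (deriv g) (Icc a b) :=
    ⟨aestronglyMeasurable_deriv g _, lt_top_iff_ne_top.2 hfin⟩
  rw [← intervalIntegral.integral_eq_sub_of_hasDerivAt
    (fun t ht ↦ (hg t (uIcc_of_le hab ▸ ht)).hasDerivAt)
    ((intervalIntegrable_iff_integrableOn_Icc_of_le hab).2 hint),
    intervalIntegral.integral_of_le hab, ← integral_Icc_eq_integral_Ioc]
  exact enorm_integral_le_lintegral_enorm _

variable [MeasurableSpace E] [BorelSpace E] {u : E → F} {K : Set E}

theorem enorm_sub_sq_le_lintegral_lineMap (hK : Convex ℝ K) (hKo : IsOpen K)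
    (hu : DifferentiableOn ℝ u K) {x y : E} (hx : x ∈ K) (hy : y ∈ K) :
    ‖u x - u y‖ₑ ^ 2 ≤ edist x y ^ 2 *
      ∫⁻ t in Icc (0 : ℝ) 1, ‖fderiv ℝ u (AffineMap.lineMap x y t)‖ₑ ^ 2 := by
  have hderiv : ∀ t ∈ Icc (0 : ℝ) 1, HasDerivAt (fun t ↦ u (AffineMap.lineMap x y t))
      (fderiv ℝ u (AffineMap.lineMap x y t) (y - x)) t := fun t ht ↦
    (hu.differentiableAt (hKo.mem_nhds (hK.lineMap_mem hx hy ht))).hasFDerivAt.comp_hasDerivAt t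
      AffineMap.hasDerivAt_lineMap
  have hmeas : Measurable fun t : ℝ ↦ ‖fderiv ℝ u (AffineMap.lineMap x y t)‖ₑ :=
    ((measurable_fderiv ℝ u).comp AffineMap.lineMap_continuous.measurable).enorm
  calc ‖u x - u y‖ₑ ^ 2
      ≤ (∫⁻ t in Icc (0 : ℝ) 1, ‖deriv (fun t ↦ u (AffineMap.lineMap x y t)) t‖ₑ) ^ 2 := by
        have := enorm_sub_le_lintegral_enorm_deriv zero_le_one
          fun t ht ↦ (hderiv t ht).differentiableAt
        simp only [AffineMap.lineMap_apply_one, AffineMap.lineMap_apply_zero] at this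
        rw [enorm_sub_rev]
        gcongr
    _ ≤ (∫⁻ t in Icc (0 : ℝ) 1, edist x y * ‖fderiv ℝ u (AffineMap.lineMap x y t)‖ₑ) ^ 2 := by
        gcongr 1
        refine setLIntegral_mono' measurableSet_Icc fun t ht ↦ ?_
        rw [(hderiv t ht).deriv, edist_eq_enorm_sub, enorm_sub_rev x, mul_comm]
        exact ContinuousLinearMap.le_opENorm _ _
    _ ≤ edist x y ^ 2 * ∫⁻ t in Icc (0 : ℝ) 1, ‖fderiv ℝ u (AffineMap.lineMap x y t)‖ₑ ^ 2 := by
        rw [lintegral_const_mul _ hmeas, mul_pow]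
        gcongr
        simpa using lintegral_sq_le_measure_univ_mul (μ := volume.restrict (Icc (0 : ℝ) 1))
          hmeas.aemeasurable

variable [FiniteDimensional ℝ E] (μ : Measure E) [μ.IsAddHaarMeasure]

theorem lintegral_comp_lineMap_le {G : E → ℝ≥0∞} (hG : Measurable G) {t : ℝ} (ht : 1 / 2 ≤ t)
    (x : E) : ∫⁻ y, G (AffineMap.lineMap x y t) ∂μ ≤ 2 ^ Module.finrank ℝ E * ∫⁻ y, G y ∂μ := by
  have ht₀ : 0 < t := by linarith
  have jacobian_le : ENNReal.ofReal |(t ^ Module.finrank ℝ E)⁻¹| ≤ 2 ^ Module.finrank ℝ E := by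
    rw [abs_of_pos (by positivity), ← inv_pow, ENNReal.ofReal_pow (by positivity),
      ← ENNReal.ofReal_ofNat 2]
    gcongr
    exact inv_le_of_inv_le₀ two_pos (by simpa using ht)
  calc ∫⁻ y, G (AffineMap.lineMap x y t) ∂μ
      = ∫⁻ y, G ((x - t • x) + t • y) ∂μ := by
        congr with y
        rw [AffineMap.lineMap_apply_module']
        congr 1
        module
    _ = ∫⁻ z, G ((x - t • x) + z) ∂(μ.map (t • ·)) := by
        rw [lintegral_map (by fun_prop) (by fun_prop)]
    _ = ENNReal.ofReal |(t ^ Module.finrank ℝ E)⁻¹| * ∫⁻ y, G y ∂μ := by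
        rw [Measure.map_addHaar_smul μ ht₀.ne', lintegral_smul_measure,
          lintegral_add_left_eq_self, smul_eq_mul]
    _ ≤ 2 ^ Module.finrank ℝ E * ∫⁻ y, G y ∂μ := by gcongr

-- At least one endpoint has weight `≥ 1/2`; integrating over that endpoint first costs `2 ^ n`.
theorem setLIntegral_setLIntegral_comp_lineMap_le (K : Set E) {G : E → ℝ≥0∞} (hG : Measurable G)
    (t : ℝ) : ∫⁻ x in K, ∫⁻ y in K, G (AffineMap.lineMap x y t) ∂μ ∂μ ≤
      2 ^ Module.finrank ℝ E * μ K * ∫⁻ y, G y ∂μ := by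
  have endpoint_bound {s : ℝ} (hs : 1 / 2 ≤ s) :
      ∫⁻ x in K, ∫⁻ y in K, G (AffineMap.lineMap x y s) ∂μ ∂μ ≤
        2 ^ Module.finrank ℝ E * μ K * ∫⁻ y, G y ∂μ :=
    calc ∫⁻ x in K, ∫⁻ y in K, G (AffineMap.lineMap x y s) ∂μ ∂μ
        ≤ ∫⁻ _ in K, 2 ^ Module.finrank ℝ E * ∫⁻ y, G y ∂μ ∂μ := by
          gcongr with x
          exact (setLIntegral_le_lintegral _ _).trans (lintegral_comp_lineMap_le μ hG hs x)
      _ = 2 ^ Module.finrank ℝ E * μ K * ∫⁻ y, G y ∂μ := by rw [setLIntegral_const]; ring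
  rcases le_total (1 / 2) t with ht | ht
  · exact endpoint_bound ht
  · have hmeas : Measurable fun p : E × E ↦ G (AffineMap.lineMap p.1 p.2 t) := by
      simp only [AffineMap.lineMap_apply_module']
      fun_prop
    rw [lintegral_lintegral_swap (f := fun x y ↦ G (AffineMap.lineMap x y t)) hmeas.aemeasurable]
    simp only [← AffineMap.lineMap_apply_one_sub _ _ t]
    exact endpoint_bound (by linarith)

theorem lintegral_lintegral_enorm_sub_sq_le (hK : Convex ℝ K) (hKo : IsOpen K)
    (hu : DifferentiableOn ℝ u K) :
    ∫⁻ x in K, ∫⁻ y in K, ‖u x - u y‖ₑ ^ 2 ∂μ ∂μ ≤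
      2 ^ Module.finrank ℝ E * ediam K ^ 2 * μ K * ∫⁻ x in K, ‖fderiv ℝ u x‖ₑ ^ 2 ∂μ := by
  have henergy : Measurable fun x ↦ ‖fderiv ℝ u x‖ₑ ^ 2 :=
    (measurable_fderiv ℝ u).enorm.pow_const 2
  obtain ⟨G, hGdef⟩ : ∃ G : E → ℝ≥0∞,
    G = K.indicator fun x ↦ ediam K ^ 2 * ‖fderiv ℝ u x‖ₑ ^ 2 := ⟨_, rfl⟩
  have hG : Measurable G := hGdef ▸ (henergy.const_mul _).indicator hKo.measurableSet
  have hG_lineMap : Measurable fun p : (E × E) × ℝ ↦ G (AffineMap.lineMap p.1.1 p.1.2 p.2) :=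
    hG.comp (by simp only [AffineMap.lineMap_apply_module']; fun_prop)
  have pointwise : ∀ x ∈ K, ∀ y ∈ K, ‖u x - u y‖ₑ ^ 2 ≤
      ∫⁻ t in Icc (0 : ℝ) 1, G (AffineMap.lineMap x y t) := fun x hx y hy ↦ by
    refine (enorm_sub_sq_le_lintegral_lineMap hK hKo hu hx hy).trans ?_
    rw [← lintegral_const_mul' _ _ (by finiteness)]
    refine setLIntegral_mono' measurableSet_Icc fun t ht ↦ ?_
    rw [hGdef, indicator_of_mem (hK.lineMap_mem hx hy ht)]
    gcongr
    exact edist_le_ediam_of_mem hx hy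
  calc ∫⁻ x in K, ∫⁻ y in K, ‖u x - u y‖ₑ ^ 2 ∂μ ∂μ
      ≤ ∫⁻ x in K, ∫⁻ y in K, (∫⁻ t in Icc (0 : ℝ) 1, G (AffineMap.lineMap x y t)) ∂μ ∂μ :=
        setLIntegral_mono' hKo.measurableSet fun x hx ↦
          setLIntegral_mono' hKo.measurableSet fun y hy ↦ pointwise x hx y hy
    _ = ∫⁻ t in Icc (0 : ℝ) 1, ∫⁻ x in K, ∫⁻ y in K, G (AffineMap.lineMap x y t) ∂μ ∂μ :=
        lintegral_lintegral_lintegral_rotate _ _ _ hG_lineMap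
    _ ≤ ∫⁻ _ in Icc (0 : ℝ) 1, 2 ^ Module.finrank ℝ E * μ K * ∫⁻ y, G y ∂μ := by
        gcongr with t
        exact setLIntegral_setLIntegral_comp_lineMap_le μ K hG t
    _ = 2 ^ Module.finrank ℝ E * ediam K ^ 2 * μ K * ∫⁻ x in K, ‖fderiv ℝ u x‖ₑ ^ 2 ∂μ := by
        rw [setLIntegral_const, hGdef, lintegral_indicator hKo.measurableSet,
          lintegral_const_mul _ henergy, Real.volume_Icc, sub_zero, ENNReal.ofReal_one]
        ring

end ConvexPoincare

section BallAverages

variable {E F : Type*} [NormedAddCommGroup E] [NormedSpace ℝ E] [FiniteDimensional ℝ E]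
  [MeasurableSpace E] [BorelSpace E] [NormedAddCommGroup F] [NormedSpace ℝ F] [CompleteSpace F]
  (μ : Measure E) [μ.IsAddHaarMeasure] {u : E → F}

theorem enorm_setAverage_sub_setAverage_sq_le_of_subset_convex {A B K : Set E}
    (hK : Convex ℝ K) (hKo : IsOpen K) (hu : DifferentiableOn ℝ u K)
    (hAK : A ⊆ K) (huA : IntegrableOn u A μ) (hA₀ : μ A ≠ 0) (hA : μ A ≠ ∞)
    (hBK : B ⊆ K) (huB : IntegrableOn u B μ) (hB₀ : μ B ≠ 0) (hB : μ B ≠ ∞) :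
    ‖(⨍ x in A, u x ∂μ) - ⨍ x in B, u x ∂μ‖ₑ ^ 2 ≤
      (μ A)⁻¹ * (μ B)⁻¹ * (2 ^ Module.finrank ℝ E * ediam K ^ 2 * μ K *
        ∫⁻ x in K, ‖fderiv ℝ u x‖ₑ ^ 2 ∂μ) :=
  calc ‖(⨍ x in A, u x ∂μ) - ⨍ x in B, u x ∂μ‖ₑ ^ 2
      ≤ ⨍⁻ x in A, ⨍⁻ y in B, ‖u x - u y‖ₑ ^ 2 ∂μ ∂μ :=
        enorm_setAverage_sub_setAverage_sq_le huA hA₀ hA huB hB₀ hB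
    _ = (μ A)⁻¹ * (μ B)⁻¹ * ∫⁻ x in A, ∫⁻ y in B, ‖u x - u y‖ₑ ^ 2 ∂μ ∂μ := by
        simp only [setLAverage_eq, ENNReal.div_eq_inv_mul]
        rw [lintegral_const_mul' _ _ (ENNReal.inv_ne_top.2 hB₀), mul_assoc]
    _ ≤ (μ A)⁻¹ * (μ B)⁻¹ * ∫⁻ x in K, ∫⁻ y in K, ‖u x - u y‖ₑ ^ 2 ∂μ ∂μ := by gcongr
    _ ≤ _ := by
        gcongr
        exact lintegral_lintegral_enorm_sub_sq_le μ hK hKo hu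

theorem addHaar_ball_mul_eq (x y : E) {t : ℝ} (ht : 0 < t) (r : ℝ) :
    μ (ball x (t * r)) = ENNReal.ofReal t ^ Module.finrank ℝ E * μ (ball y r) := by
  rw [Measure.addHaar_ball_mul_of_pos μ x ht, ← Measure.addHaar_ball_center μ y,
    ENNReal.ofReal_pow ht.le]

theorem inv_addHaar_ball_le_of_half_le (p q : E) {ρ ρ' : ℝ} (hρ : 0 < ρ) (hρ' : ρ / 2 ≤ ρ') :
    (μ (ball q ρ'))⁻¹ ≤ 2 ^ Module.finrank ℝ E * (μ (ball p ρ))⁻¹ := by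
  have hle : μ (ball p ρ) ≤ 2 ^ Module.finrank ℝ E * μ (ball q ρ') :=
    calc μ (ball p ρ) = μ (ball p (2 * (ρ / 2))) := by rw [mul_div_cancel₀ ρ two_ne_zero]
      _ = 2 ^ Module.finrank ℝ E * μ (ball q (ρ / 2)) := by
        simpa using addHaar_ball_mul_eq μ p q two_pos (ρ / 2)
      _ ≤ 2 ^ Module.finrank ℝ E * μ (ball q ρ') := by gcongr
  rw [ENNReal.inv_le_iff_le_mul (fun _ ↦ (measure_ball_pos μ q (by linarith)).ne')
      fun h ↦ absurd h measure_ball_lt_top.ne,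
    ← mul_assoc, mul_comm (μ _),
    ← ENNReal.mul_inv_cancel (measure_ball_pos μ p hρ).ne' measure_ball_lt_top.ne]
  gcongr

-- The factor `3` leaves room for the closed balls, on which `u` is integrable.
theorem enorm_average_ball_sub_average_ball_sq_le {p q : E} {ρ ρ' : ℝ} (hρ : 0 < ρ)
    (hρ' : ρ / 2 ≤ ρ') (hρ'ρ : ρ' ≤ ρ) (hpq : dist p q ≤ ρ)
    (hu : DifferentiableOn ℝ u (ball p (3 * ρ))) :
    ‖(⨍ x in ball p ρ, u x ∂μ) - ⨍ x in ball q ρ', u x ∂μ‖ₑ ^ 2 ≤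
      12 ^ Module.finrank ℝ E * ENNReal.ofReal (6 * ρ) ^ 2 * (μ (ball p ρ))⁻¹ *
        ∫⁻ x in ball p (3 * ρ), ‖fderiv ℝ u x‖ₑ ^ 2 ∂μ := by
  set n := Module.finrank ℝ E
  set V := μ (ball p ρ)
  have hV₀ : V ≠ 0 := (measure_ball_pos μ p hρ).ne'
  have hV : V ≠ ∞ := measure_ball_lt_top.ne
  have hint {a : E} {s : ℝ} (hs : closedBall a s ⊆ ball p (3 * ρ)) : IntegrableOn u (ball a s) μ :=
    ((hu.continuousOn.mono hs).integrableOn_compact (isCompact_closedBall a s)).mono_set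
      ball_subset_closedBall
  have hB₀ : μ (ball q ρ') ≠ 0 := (measure_ball_pos μ q (by linarith)).ne'
  have hqK : closedBall q ρ' ⊆ ball p (3 * ρ) :=
    closedBall_subset_ball' (by rw [dist_comm]; linarith)
  have hpK : closedBall p ρ ⊆ ball p (3 * ρ) := closedBall_subset_ball (by linarith)
  have hdiam : ediam (ball p (3 * ρ)) ≤ ENNReal.ofReal (6 * ρ) := by
    rw [show 6 * ρ = 2 * (3 * ρ) by ring, ENNReal.ofReal_mul two_pos.le, ENNReal.ofReal_ofNat,
      ← Metric.eball_ofReal]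
    exact ediam_eball_le
  have hlarge : μ (ball p (3 * ρ)) = 3 ^ n * V := by
    simpa using addHaar_ball_mul_eq μ p p three_pos ρ
  calc _ ≤ V⁻¹ * (μ (ball q ρ'))⁻¹ * (2 ^ n * ediam (ball p (3 * ρ)) ^ 2 * μ (ball p (3 * ρ)) *
        ∫⁻ x in ball p (3 * ρ), ‖fderiv ℝ u x‖ₑ ^ 2 ∂μ) :=
        enorm_setAverage_sub_setAverage_sq_le_of_subset_convex μ (convex_ball _ _) isOpen_ball hu
          (ball_subset_closedBall.trans hpK) (hint hpK) hV₀ hV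
          (ball_subset_closedBall.trans hqK) (hint hqK)
          hB₀ measure_ball_lt_top.ne
    _ ≤ V⁻¹ * (2 ^ n * V⁻¹) * (2 ^ n * ENNReal.ofReal (6 * ρ) ^ 2 * (3 ^ n * V) *
        ∫⁻ x in ball p (3 * ρ), ‖fderiv ℝ u x‖ₑ ^ 2 ∂μ) := by
        rw [hlarge]
        gcongr
        exact inv_addHaar_ball_le_of_half_le μ p q hρ hρ'
    _ = 12 ^ n * ENNReal.ofReal (6 * ρ) ^ 2 * (V⁻¹ * (V⁻¹ * V)) *
        ∫⁻ x in ball p (3 * ρ), ‖fderiv ℝ u x‖ₑ ^ 2 ∂μ := by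
        rw [show (12 : ℝ≥0∞) = 2 * 2 * 3 by norm_num, mul_pow, mul_pow]
        ring
    _ = _ := by rw [ENNReal.inv_mul_cancel hV₀ hV, mul_one]

end BallAverages

section Telescoping

theorem enorm_sub_sq_le_tsum_mul_tsum_of_tendsto {F : Type*} [NormedAddCommGroup F] {a : ℕ → F}
    {b : F} (ha : Tendsto a atTop (𝓝 b)) {f g : ℕ → ℝ≥0∞}
    (h : ∀ k, ‖a k - a (k + 1)‖ₑ ^ 2 ≤ f k * g k) :
    ‖b - a 0‖ₑ ^ 2 ≤ (∑' k, f k) * ∑' k, g k := by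
  refine le_trans ?_ (tsum_sq_le_tsum_mul_tsum_of_sq_le_mul h)
  rw [enorm_sub_rev, ← edist_eq_enorm_sub]
  gcongr
  exact edist_le_tsum_of_edist_le_of_tendsto₀ _ (fun k ↦ (edist_eq_enorm_sub _ _).le) ha

theorem tsum_ofReal_div_two_pow {ρ : ℝ} (hρ : 0 ≤ ρ) :
    ∑' k : ℕ, ENNReal.ofReal (ρ / 2 ^ k) = ENNReal.ofReal (2 * ρ) := by
  have hsum := hasSum_geometric_two' (2 * ρ)
  simp only [mul_div_cancel_left₀ ρ two_ne_zero] at hsum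
  rw [← ENNReal.ofReal_tsum_of_nonneg (fun k ↦ by positivity) hsum.summable, hsum.tsum_eq]

end Telescoping

section Averaging

variable {E : Type*} [NormedAddCommGroup E] [MeasurableSpace E] [BorelSpace E]
  (μ : Measure E) {g : E → ℝ≥0∞}

theorem setLIntegral_ball_inter_eq_setLIntegral_indicator (g : E → ℝ≥0∞) (Ω : Set E) (x : E)
    (t : ℝ) :
    ∫⁻ y in ball x t ∩ Ω, g y ∂μ = ∫⁻ y in Ω, (ball x t).indicator g y ∂μ := by
  rw [lintegral_indicator measurableSet_ball, Measure.restrict_restrict measurableSet_ball]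

variable [SecondCountableTopology E]

theorem measurable_uncurry_indicator_ball (hg : Measurable g) (t : ℝ) :
    Measurable (Function.uncurry fun x y : E ↦ (ball x t).indicator g y) :=
  (hg.comp measurable_snd).indicator
    (isOpen_lt (by fun_prop) continuous_const : IsOpen {p : E × E | dist p.2 p.1 < t}).measurableSet

theorem measurable_setLIntegral_ball_inter [SFinite μ] (hg : Measurable g) (Ω : Set E) (t : ℝ) :
    Measurable fun x ↦ ∫⁻ y in ball x t ∩ Ω, g y ∂μ := by
  simp only [setLIntegral_ball_inter_eq_setLIntegral_indicator]
  exact (measurable_uncurry_indicator_ball hg t).lintegral_prod_right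

theorem setLIntegral_setLIntegral_ball_inter_le [SFinite μ] [μ.IsAddHaarMeasure]
    (hg : Measurable g) (Ω : Set E) (t : ℝ) :
    ∫⁻ x in Ω, ∫⁻ y in ball x t ∩ Ω, g y ∂μ ∂μ ≤ μ (ball 0 t) * ∫⁻ y in Ω, g y ∂μ := by
  simp only [setLIntegral_ball_inter_eq_setLIntegral_indicator]
  rw [lintegral_lintegral_swap (measurable_uncurry_indicator_ball hg t).aemeasurable,
    ← lintegral_const_mul _ hg]
  gcongr with y
  calc ∫⁻ x in Ω, (ball x t).indicator g y ∂μ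
      ≤ ∫⁻ x, (ball x t).indicator g y ∂μ := setLIntegral_le_lintegral _ _
    _ = ∫⁻ x, (ball y t).indicator (fun _ ↦ g y) x ∂μ := by
        simp only [indicator, mem_ball, dist_comm y]
    _ = μ (ball 0 t) * g y := by
        rw [lintegral_indicator measurableSet_ball, setLIntegral_const, mul_comm,
          Measure.addHaar_ball_center]

end Averaging

section MultiscaleAveraging

variable {E : Type*} [NormedAddCommGroup E] [NormedSpace ℝ E] [FiniteDimensional ℝ E]
  [MeasurableSpace E] [BorelSpace E] (μ : Measure E) [μ.IsAddHaarMeasure] {g : E → ℝ≥0∞}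

theorem inv_mul_setLIntegral_setLIntegral_ball_inter_le (hg : Measurable g) (Ω : Set E) {c t : ℝ}
    (hc : 0 < c) (ht : 0 < t) :
    (μ (ball 0 t))⁻¹ * ∫⁻ x in Ω, ∫⁻ y in ball x (c * t) ∩ Ω, g y ∂μ ∂μ ≤
      ENNReal.ofReal c ^ Module.finrank ℝ E * ∫⁻ y in Ω, g y ∂μ :=
  calc (μ (ball 0 t))⁻¹ * ∫⁻ x in Ω, ∫⁻ y in ball x (c * t) ∩ Ω, g y ∂μ ∂μ
      ≤ (μ (ball 0 t))⁻¹ * (μ (ball 0 (c * t)) * ∫⁻ y in Ω, g y ∂μ) := by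
        gcongr
        exact setLIntegral_setLIntegral_ball_inter_le μ hg Ω _
    _ = ENNReal.ofReal c ^ Module.finrank ℝ E * ((μ (ball 0 t))⁻¹ * μ (ball 0 t)) *
          ∫⁻ y in Ω, g y ∂μ := by
        rw [addHaar_ball_mul_eq μ 0 0 hc]
        ring
    _ = _ := by
        rw [ENNReal.inv_mul_cancel (measure_ball_pos _ _ ht).ne' measure_ball_lt_top.ne, mul_one]

theorem setLIntegral_tsum_inv_mul_setLIntegral_ball_inter_le (hg : Measurable g) (Ω : Set E)
    {c : ℝ} (hc : 0 < c) (a : ℕ → ℝ≥0∞) {s : ℕ → ℝ} (hs : ∀ k, 0 < s k) :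
    ∫⁻ x in Ω, ∑' k, a k * ((μ (ball 0 (s k)))⁻¹ * ∫⁻ y in ball x (c * s k) ∩ Ω, g y ∂μ) ∂μ ≤
      (∑' k, a k) * (ENNReal.ofReal c ^ Module.finrank ℝ E * ∫⁻ y in Ω, g y ∂μ) := by
  have hmeas (t : ℝ) := measurable_setLIntegral_ball_inter μ hg Ω t
  rw [lintegral_tsum fun k ↦ (((hmeas _).const_mul _).const_mul _).aemeasurable,
    ← ENNReal.tsum_mul_right]
  gcongr with k
  rw [lintegral_const_mul _ ((hmeas _).const_mul _), lintegral_const_mul _ (hmeas _)]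
  exact mul_le_mul_right (inv_mul_setLIntegral_setLIntegral_ball_inter_le μ hg Ω hc (hs k)) _

end MultiscaleAveraging

section Chaining

theorem edist_le_of_eVariationOn_le {X Y : Type*} [PseudoMetricSpace X] [PseudoEMetricSpace Y]
    {γ : ℝ → X} {g : ℝ → Y} {δ b : ℝ} {ε : ℝ≥0∞} (hδ : 0 ≤ δ) (N : ℕ) {a : ℝ} (hab : a ≤ b)
    (hγ : ContinuousOn γ (Icc a b))
    (hg : ∀ s ∈ Icc a b, ∀ t ∈ Icc a b, dist (γ s) (γ t) ≤ δ → edist (g s) (g t) ≤ ε)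
    (hvar : eVariationOn γ (Icc a b) ≤ ENNReal.ofReal (N * δ)) :
    edist (g a) (g b) ≤ (N + 1) * ε := by
  induction N generalizing a with
  | zero =>
    have ha := left_mem_Icc.2 hab
    have hb := right_mem_Icc.2 hab
    have hdist := (eVariationOn.edist_le γ ha hb).trans hvar
    rw [edist_dist, Nat.cast_zero, zero_mul, ENNReal.ofReal_le_ofReal_iff le_rfl] at hdist
    simpa using hg a ha b hb (hdist.trans hδ)
  | succ N ih =>
    have ha := left_mem_Icc.2 hab
    rcases le_or_gt (dist (γ a) (γ b)) δ with hnear | hfar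
    · exact (hg a ha b (right_mem_Icc.2 hab) hnear).trans (le_mul_of_one_le_left' le_add_self)
    obtain ⟨t, ht, hat : dist (γ a) (γ t) = δ⟩ :=
      intermediate_value_Icc hab (f := fun t ↦ dist (γ a) (γ t)) (by fun_prop)
        ⟨by simpa using hδ, hfar.le⟩
    have hsub : Icc t b ⊆ Icc a b := Icc_subset_Icc_left ht.1
    have hvar_tail : eVariationOn γ (Icc t b) ≤ ENNReal.ofReal (N * δ) := by
      have hsplit := eVariationOn.Icc_add_Icc γ (s := univ) ht.1 ht.2 (mem_univ _)
      simp only [univ_inter] at hsplit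
      refine (ENNReal.add_le_add_iff_left (ENNReal.ofReal_ne_top (r := δ))).1 ?_
      calc ENNReal.ofReal δ + eVariationOn γ (Icc t b)
          ≤ eVariationOn γ (Icc a t) + eVariationOn γ (Icc t b) := by
            gcongr
            rw [← hat, ← edist_dist]
            exact eVariationOn.edist_le γ (left_mem_Icc.2 ht.1) (right_mem_Icc.2 ht.1)
        _ ≤ ENNReal.ofReal ((N + 1 : ℕ) * δ) := hsplit.trans_le hvar
        _ = ENNReal.ofReal δ + ENNReal.ofReal (N * δ) := by
            rw [← ENNReal.ofReal_add hδ (by positivity)]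
            push_cast
            ring_nf
    calc edist (g a) (g b) ≤ edist (g a) (g t) + edist (g t) (g b) := edist_triangle _ _ _
      _ ≤ ε + (N + 1) * ε := by
          gcongr
          · exact hg a ha t ht hat.le
          · exact ih ht.2 (hγ.mono hsub)
              (fun s hs s' hs' ↦ hg s (hsub hs) s' (hsub hs')) hvar_tail
      _ = ((N + 1 : ℕ) + 1) * ε := by push_cast; ring

end Chaining

section UniformDomains

theorem ball_infDist_frontier_subset {E : Type*} [NormedAddCommGroup E] [NormedSpace ℝ E]
    {Ω : Set E} (hΩ : IsOpen Ω) {y : E} (hy : y ∈ closure Ω) :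
    ball y (infDist y (frontier Ω)) ⊆ Ω := by
  rcases le_or_gt (infDist y (frontier Ω)) 0 with hzero | hpos
  · simp [ball_eq_empty.2 hzero]
  have closure_inter_subset : closure Ω ∩ ball y (infDist y (frontier Ω)) ⊆ Ω := fun z hz ↦ by
    by_contra hzΩ
    exact disjoint_left.1 disjoint_ball_infDist hz.2 (hΩ.frontier_eq ▸ ⟨hz.1, hzΩ⟩)
  have hyball := mem_ball_self (x := y) hpos
  exact (convex_ball y _).isPreconnected.subset_of_closure_inter_subset hΩ
    ⟨y, hyball, closure_inter_subset ⟨hy, hyball⟩⟩ closure_inter_subset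

/-- `z` is a corkscrew point of `Ω` near `x` at scale `r`: a point of `Ω` within distance `r` of `x`
whose distance to the boundary is comparable to `r`, with comparability constant `c`. -/
structure IsCorkscrewPoint {X : Type*} [PseudoMetricSpace X] (c : ℝ) (Ω : Set X) (x : X) (r : ℝ)
    (z : X) : Prop where
  mem : z ∈ Ω
  dist_le : dist z x ≤ r
  le_infDist : c * r ≤ infDist z (frontier Ω)

theorem IsCorkscrewPoint.closedBall_subset {E : Type*} [NormedAddCommGroup E] [NormedSpace ℝ E]
    {Ω : Set E} (hΩ : IsOpen Ω) {c r s : ℝ} {x z : E} (hz : IsCorkscrewPoint c Ω x r z)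
    (hs : s < c * r) : closedBall z s ⊆ Ω :=
  (closedBall_subset_ball (hs.trans_le hz.le_infDist)).trans
    (ball_infDist_frontier_subset hΩ (subset_closure hz.mem))

theorem tendsto_average_ball_of_isCorkscrewPoint {E F : Type*} [NormedAddCommGroup E]
    [NormedSpace ℝ E] [FiniteDimensional ℝ E] [MeasurableSpace E] [BorelSpace E] (μ : Measure E)
    [μ.IsAddHaarMeasure] [NormedAddCommGroup F] [NormedSpace ℝ F] [CompleteSpace F] {u : E → F}
    {Ω : Set E} (hΩ : IsOpen Ω) (hu : ContinuousOn u Ω) {x : E} (hx : x ∈ Ω) {c : ℝ} {r s : ℕ → ℝ}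
    {z : ℕ → E} (hz : ∀ k, IsCorkscrewPoint c Ω x (r k) (z k)) (hr : Tendsto r atTop (𝓝 0))
    (hs : ∀ k, 0 < s k) (hsr : ∀ k, s k < c * r k) :
    Tendsto (fun k ↦ ⨍ y in ball (z k) (s k), u y ∂μ) atTop (𝓝 (u x)) := by
  have hint (k : ℕ) : IntegrableOn u (ball (z k) (s k)) μ :=
    ((hu.mono ((hz k).closedBall_subset hΩ (hsr k))).integrableOn_compact
      (isCompact_closedBall _ _)).mono_set ball_subset_closedBall
  refine tendsto_setAverage_of_continuousAt (hu.continuousAt (hΩ.mem_nhds hx)) ?_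
    (fun k ↦ (measure_ball_pos _ _ (hs k)).ne') (fun k ↦ measure_ball_lt_top.ne)
    (fun k ↦ measurableSet_ball) hint
  have hradius : Tendsto (fun k ↦ c * r k + r k) atTop (𝓝 0) := by
    simpa using (hr.const_mul c).add hr
  refine Metric.nhds_basis_ball.smallSets.tendsto_right_iff.2 fun ε hε ↦ ?_
  filter_upwards [hradius.eventually_lt_const hε] with k hk
  exact ball_subset_ball' (by linarith [(hz k).dist_le, hsr k])

variable {n : ℕ} {M : ℝ} {Ω : Set (EuclideanSpace ℝ (Fin n))}

theorem IsMUniform.isOpen (hΩ : IsMUniform M Ω) : IsOpen Ω := hΩ.1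

theorem IsMUniform.exists_isCorkscrewPoint (hΩ : IsMUniform M Ω) (hM : 0 < M)
    {x : EuclideanSpace ℝ (Fin n)} (hx : x ∈ Ω) {r : ℝ} (hr : 0 < r) (hrd : r ≤ diam Ω) :
    ∃ z, IsCorkscrewPoint (1 / (5 * M)) Ω x r z := by
  obtain ⟨y, hy, hyx⟩ : ∃ y ∈ Ω, 2 * (r / 5) ≤ dist y x := by
    by_contra! hnear
    have : diam Ω ≤ 4 * (r / 5) := diam_le_of_forall_dist_le (by positivity) fun a ha b hb ↦ by
      linarith [dist_triangle_right a b x, hnear a ha, hnear b hb]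
    linarith
  obtain ⟨γ, hγ, h0, h1, hcl, -, hcigar⟩ := hΩ.2.2 x (subset_closure hx) y (subset_closure hy)
  obtain ⟨t, ht, htx : dist (γ t) x = r / 5⟩ :=
    intermediate_value_Icc zero_le_one (f := fun t ↦ dist (γ t) x) (by fun_prop)
      (show r / 5 ∈ _ from ⟨by rw [h0, dist_self]; positivity, by rw [h1]; linarith⟩)
  have hty : r / 5 ≤ dist (γ t) y := by linarith [dist_triangle_left y x (γ t)]
  have hclear : 1 / (5 * M) * r ≤ infDist (γ t) (frontier Ω) :=
    calc 1 / (5 * M) * r = 1 / M * min (dist (γ t) x) (dist (γ t) y) := by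
          rw [htx, min_eq_left hty]
          field_simp
      _ ≤ infDist (γ t) (frontier Ω) := hcigar t ht
  exact ⟨γ t, ball_infDist_frontier_subset hΩ.isOpen (hcl t ht)
    (mem_ball_self (lt_of_lt_of_le (by positivity) hclear)), by linarith, hclear⟩

theorem IsMUniform.exists_curve_ball_subset (hΩ : IsMUniform M Ω) (hM : 1 ≤ M)
    {p q : EuclideanSpace ℝ (Fin n)} (hp : p ∈ Ω) (hq : q ∈ Ω) {s : ℝ} (hs : 0 ≤ s)
    (hps : s ≤ infDist p (frontier Ω)) (hqs : s ≤ infDist q (frontier Ω)) :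
    ∃ γ : ℝ → EuclideanSpace ℝ (Fin n), ContinuousOn γ (Icc 0 1) ∧ γ 0 = p ∧ γ 1 = q ∧
      eVariationOn γ (Icc 0 1) ≤ ENNReal.ofReal (M * dist p q) ∧
      ∀ t ∈ Icc (0 : ℝ) 1, ball (γ t) (s / (2 * M)) ⊆ Ω := by
  obtain ⟨γ, hγ, h0, h1, hcl, hvar, hcigar⟩ := hΩ.2.2 p (subset_closure hp) q (subset_closure hq)
  refine ⟨γ, hγ, h0, h1, hvar, fun t ht ↦ ?_⟩
  refine (ball_subset_ball ?_).trans (ball_infDist_frontier_subset hΩ.isOpen (hcl t ht))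
  have clear_near_endpoint {w : EuclideanSpace ℝ (Fin n)} (hw : s ≤ infDist w (frontier Ω))
      (htw : dist (γ t) w < s / 2) : s / (2 * M) ≤ infDist (γ t) (frontier Ω) :=
    calc s / (2 * M) ≤ s / 2 := by gcongr; linarith
      _ ≤ infDist (γ t) (frontier Ω) := by
        linarith [infDist_le_infDist_add_dist (s := frontier Ω) (x := w) (y := γ t),
          dist_comm w (γ t)]
  rcases lt_or_ge (dist (γ t) p) (s / 2) with hnear | hfar_p
  · exact clear_near_endpoint hps hnear
  rcases lt_or_ge (dist (γ t) q) (s / 2) with hnear | hfar_q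
  · exact clear_near_endpoint hqs hnear
  calc s / (2 * M) = 1 / M * (s / 2) := by field_simp
    _ ≤ 1 / M * min (dist (γ t) p) (dist (γ t) q) := by gcongr; exact le_min hfar_p hfar_q
    _ ≤ infDist (γ t) (frontier Ω) := hcigar t ht

variable {F : Type*} [NormedAddCommGroup F] [NormedSpace ℝ F] [CompleteSpace F]
  {u : EuclideanSpace ℝ (Fin n) → F} {N : ℕ} {ρ : ℝ}

theorem IsMUniform.enorm_average_ball_sub_average_ball_sq_le (hΩ : IsMUniform M Ω) (hM : 1 ≤ M)
    (hu : DifferentiableOn ℝ u Ω) {p q : EuclideanSpace ℝ (Fin n)} (hp : p ∈ Ω) (hq : q ∈ Ω)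
    (hρ : 0 < ρ) (hpρ : 6 * M * ρ ≤ infDist p (frontier Ω))
    (hqρ : 6 * M * ρ ≤ infDist q (frontier Ω)) (hN : M * dist p q ≤ N * ρ) :
    ‖(⨍ y in ball p ρ, u y) - ⨍ y in ball q (ρ / 2), u y‖ₑ ^ 2 ≤
      (N + 2) ^ 2 * (12 ^ n * ENNReal.ofReal (6 * ρ) ^ 2 *
        (volume (ball (0 : EuclideanSpace ℝ (Fin n)) ρ))⁻¹ *
          ∫⁻ y in ball p ((N + 3) * ρ) ∩ Ω, ‖fderiv ℝ u y‖ₑ ^ 2) := by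
  obtain ⟨γ, hγ, rfl, rfl, hvar, htube⟩ :=
    hΩ.exists_curve_ball_subset hM hp hq (by positivity) hpρ hqρ
  rw [show 6 * M * ρ / (2 * M) = 3 * ρ by field_simp; norm_num] at htube
  replace hvar := hvar.trans (ENNReal.ofReal_le_ofReal hN)
  set T := 12 ^ n * ENNReal.ofReal (6 * ρ) ^ 2 *
    (volume (ball (0 : EuclideanSpace ℝ (Fin n)) ρ))⁻¹ *
      ∫⁻ y in ball (γ 0) ((N + 3) * ρ) ∩ Ω, ‖fderiv ℝ u y‖ₑ ^ 2 with hT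
  have step {t : ℝ} (ht : t ∈ Icc (0 : ℝ) 1) {w : EuclideanSpace ℝ (Fin n)} {ρ' : ℝ}
      (hρ' : ρ / 2 ≤ ρ') (hρ'ρ : ρ' ≤ ρ) (htw : dist (γ t) w ≤ ρ) :
      edist (⨍ y in ball (γ t) ρ, u y) (⨍ y in ball w ρ', u y) ≤ T ^ (2⁻¹ : ℝ) := by
    have hdist : dist (γ t) (γ 0) ≤ N * ρ := by
      have := (eVariationOn.edist_le γ ht (left_mem_Icc.2 zero_le_one)).trans hvar
      rwa [edist_dist, ENNReal.ofReal_le_ofReal_iff (by positivity)] at this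
    rw [edist_eq_enorm_sub, ENNReal.le_rpow_inv_iff two_pos, ENNReal.rpow_two]
    refine (_root_.enorm_average_ball_sub_average_ball_sq_le volume hρ hρ' hρ'ρ htw
      (hu.mono (htube t ht))).trans ?_
    rw [Measure.addHaar_ball_center, finrank_euclideanSpace_fin, hT]
    gcongr
    exact subset_inter (ball_subset_ball' (by linarith)) (htube t ht)
  have chain := edist_le_of_eVariationOn_le hρ.le N zero_le_one hγ
    (g := fun t ↦ ⨍ y in ball (γ t) ρ, u y)
    (fun s hs t _ hst ↦ step hs (by linarith) le_rfl hst) hvar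
  have last := step (right_mem_Icc.2 zero_le_one) (w := γ 1) le_rfl (by linarith)
    (by simpa using hρ.le)
  rw [← edist_eq_enorm_sub]
  calc edist (⨍ y in ball (γ 0) ρ, u y) (⨍ y in ball (γ 1) (ρ / 2), u y) ^ 2
      ≤ ((N + 1) * T ^ (2⁻¹ : ℝ) + T ^ (2⁻¹ : ℝ)) ^ 2 := by
        gcongr
        exact (edist_triangle _ _ _).trans (add_le_add chain last)
    _ = (N + 2) ^ 2 * (T ^ (2⁻¹ : ℝ)) ^ 2 := by ring
    _ = (N + 2) ^ 2 * T := by rw [rpow_inv_two_sq]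

theorem IsMUniform.enorm_average_sub_average_sq_le_of_isCorkscrewPoint (hΩ : IsMUniform M Ω)
    (hM : 1 ≤ M) (hu : DifferentiableOn ℝ u Ω) (hρ : 0 < ρ) (hN : 90 * M ^ 3 ≤ N)
    {x z z' : EuclideanSpace ℝ (Fin n)}
    (hz : IsCorkscrewPoint (1 / (5 * M)) Ω x (60 * M ^ 2 * ρ) z)
    (hz' : IsCorkscrewPoint (1 / (5 * M)) Ω x (60 * M ^ 2 * (ρ / 2)) z') :
    ‖(⨍ y in ball z ρ, u y) - ⨍ y in ball z' (ρ / 2), u y‖ₑ ^ 2 ≤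
      (N + 2) ^ 2 * (12 ^ n * ENNReal.ofReal (6 * ρ) ^ 2 *
        (volume (ball (0 : EuclideanSpace ℝ (Fin n)) ρ))⁻¹ *
          ∫⁻ y in ball x (2 * N * ρ) ∩ Ω, ‖fderiv ℝ u y‖ₑ ^ 2) := by
  have : 0 < M := by linarith
  have hclear : 6 * M * ρ = 1 / (5 * M) * (60 * M ^ 2 * (ρ / 2)) := by field_simp; norm_num
  have hzz' : dist z z' ≤ 90 * M ^ 2 * ρ := by
    linarith [dist_triangle_right z z' x, hz.dist_le, hz'.dist_le]
  refine (hΩ.enorm_average_ball_sub_average_ball_sq_le hM hu hz.mem hz'.mem hρ ?_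
    (hclear.trans_le hz'.le_infDist) (N := N) ?_).trans ?_
  · refine hclear.trans_le (le_trans ?_ hz.le_infDist)
    gcongr
    linarith
  · calc M * dist z z' ≤ M * (90 * M ^ 2 * ρ) := by gcongr
      _ = 90 * M ^ 3 * ρ := by ring
      _ ≤ N * ρ := by gcongr
  · gcongr
    refine ball_subset_ball' ?_
    have hM3 : M ^ 2 ≤ M ^ 3 := pow_le_pow_right₀ hM (by norm_num)
    have hM2 : 1 ≤ M ^ 2 := one_le_pow₀ hM
    calc (N + 3) * ρ + dist z x ≤ (N + 3 + 60 * M ^ 2) * ρ := by linarith [hz.dist_le]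
      _ ≤ 2 * N * ρ := by gcongr; linarith

theorem IsMUniform.exists_seq_isCorkscrewPoint (hΩ : IsMUniform M Ω) (hM : 0 < M) {r : ℝ}
    (hr : 0 < r) (hrd : r ≤ diam Ω) {x z : EuclideanSpace ℝ (Fin n)} (hx : x ∈ Ω)
    (hz : IsCorkscrewPoint (1 / (5 * M)) Ω x r z) :
    ∃ w : ℕ → EuclideanSpace ℝ (Fin n), w 0 = z ∧
      ∀ k, IsCorkscrewPoint (1 / (5 * M)) Ω x (r / 2 ^ k) (w k) := by
  have hscale (k : ℕ) : r / 2 ^ k ≤ diam Ω :=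
    (div_le_self hr.le (one_le_pow₀ one_le_two)).trans hrd
  choose w hw using fun k ↦ hΩ.exists_isCorkscrewPoint hM hx (by positivity) (hscale k)
  refine ⟨Function.update w 0 z, Function.update_self .., fun k ↦ ?_⟩
  rcases eq_or_ne k 0 with rfl | hk
  · simpa using hz
  · simpa [hk] using hw k

theorem IsMUniform.enorm_sub_average_sq_le_tsum (hΩ : IsMUniform M Ω) (hM : 1 ≤ M)
    (hu : DifferentiableOn ℝ u Ω) (hρ : 0 < ρ) (hρd : 60 * M ^ 2 * ρ ≤ diam Ω)
    (hN : 90 * M ^ 3 ≤ N) {x z : EuclideanSpace ℝ (Fin n)} (hx : x ∈ Ω)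
    (hz : IsCorkscrewPoint (1 / (5 * M)) Ω x (60 * M ^ 2 * ρ) z) :
    ‖u x - ⨍ y in ball z ρ, u y‖ₑ ^ 2 ≤
      ENNReal.ofReal (12 * ρ) * ∑' k : ℕ, (N + 2) ^ 2 * 12 ^ n *
        ENNReal.ofReal (6 * ρ / 2 ^ k) *
          ((volume (ball (0 : EuclideanSpace ℝ (Fin n)) (ρ / 2 ^ k)))⁻¹ *
            ∫⁻ y in ball x (2 * N * (ρ / 2 ^ k)) ∩ Ω, ‖fderiv ℝ u y‖ₑ ^ 2) := by
  have hM₀ : 0 < M := by linarith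
  obtain ⟨w, rfl, hw⟩ := hΩ.exists_seq_isCorkscrewPoint hM₀ (by positivity) hρd hx hz
  have hlim := tendsto_average_ball_of_isCorkscrewPoint volume hΩ.isOpen hu.continuousOn hx hw
    (tendsto_const_nhds.div_atTop (tendsto_pow_atTop_atTop_of_one_lt one_lt_two))
    (s := fun k ↦ ρ / 2 ^ k) (fun k ↦ by positivity) fun k ↦
      calc ρ / 2 ^ k < 12 * M * (ρ / 2 ^ k) := lt_mul_of_one_lt_left (by positivity) (by linarith)
        _ = 1 / (5 * M) * (60 * M ^ 2 * ρ / 2 ^ k) := by field_simp; norm_num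
  have htsum := tsum_ofReal_div_two_pow (ρ := 6 * ρ) (by positivity)
  rw [show 2 * (6 * ρ) = 12 * ρ by ring] at htsum
  rw [← htsum]
  refine le_trans ?_ (enorm_sub_sq_le_tsum_mul_tsum_of_tendsto hlim fun k ↦ ?_)
  · rw [pow_zero, div_one]
  have hk := hw k
  have hk' := hw (k + 1)
  rw [mul_div_assoc] at hk hk'
  have halve : ρ / 2 ^ (k + 1) = ρ / 2 ^ k / 2 := by rw [pow_succ, div_div]
  rw [halve] at hk' ⊢
  refine (hΩ.enorm_average_sub_average_sq_le_of_isCorkscrewPoint hM hu (by positivity) hN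
    hk hk').trans_eq ?_
  rw [mul_div_assoc]
  ring

theorem IsMUniform.lintegral_enorm_sub_average_sq_le (hΩ : IsMUniform M Ω) (hM : 1 ≤ M)
    (hu : DifferentiableOn ℝ u Ω) (hρ : 0 < ρ) (hρd : 60 * M ^ 2 * ρ ≤ diam Ω)
    (hN : 90 * M ^ 3 ≤ N) {z : EuclideanSpace ℝ (Fin n)}
    (hz : ∀ x ∈ Ω, IsCorkscrewPoint (1 / (5 * M)) Ω x (60 * M ^ 2 * ρ) z) :
    ∫⁻ x in Ω, ‖u x - ⨍ y in ball z ρ, u y‖ₑ ^ 2 ≤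
      (N + 2) ^ 2 * (24 * N) ^ n * ENNReal.ofReal (12 * ρ) ^ 2 *
        ∫⁻ x in Ω, ‖fderiv ℝ u x‖ₑ ^ 2 := by
  have hN₀ : (0 : ℝ) < 2 * N := by
    have : 0 < M := by linarith
    have : 0 < 90 * M ^ 3 := by positivity
    linarith
  calc ∫⁻ x in Ω, ‖u x - ⨍ y in ball z ρ, u y‖ₑ ^ 2
      ≤ ∫⁻ x in Ω, ENNReal.ofReal (12 * ρ) * ∑' k : ℕ, (N + 2) ^ 2 * 12 ^ n *
          ENNReal.ofReal (6 * ρ / 2 ^ k) *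
            ((volume (ball (0 : EuclideanSpace ℝ (Fin n)) (ρ / 2 ^ k)))⁻¹ *
              ∫⁻ y in ball x (2 * N * (ρ / 2 ^ k)) ∩ Ω, ‖fderiv ℝ u y‖ₑ ^ 2) :=
        setLIntegral_mono' hΩ.isOpen.measurableSet fun x hx ↦
          hΩ.enorm_sub_average_sq_le_tsum hM hu hρ hρd hN hx (hz x hx)
    _ ≤ ENNReal.ofReal (12 * ρ) * ((∑' k : ℕ, (N + 2) ^ 2 * 12 ^ n *
          ENNReal.ofReal (6 * ρ / 2 ^ k)) * (ENNReal.ofReal (2 * N) ^ n *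
            ∫⁻ x in Ω, ‖fderiv ℝ u x‖ₑ ^ 2)) := by
        rw [lintegral_const_mul' _ _ ENNReal.ofReal_ne_top]
        gcongr
        simpa only [finrank_euclideanSpace_fin] using
          setLIntegral_tsum_inv_mul_setLIntegral_ball_inter_le volume
            ((measurable_fderiv ℝ u).enorm.pow_const 2) Ω hN₀ _ fun k ↦ by positivity
    _ = _ := by
        rw [ENNReal.tsum_mul_left, tsum_ofReal_div_two_pow (by positivity),
          show 2 * (6 * ρ) = 12 * ρ by ring, ENNReal.ofReal_mul two_pos.le, ENNReal.ofReal_ofNat,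
          ENNReal.ofReal_natCast, show 24 * (N : ℝ≥0∞) = 12 * (2 * N) by ring, mul_pow 12]
        ring

theorem IsMUniform.exists_lintegral_enorm_sub_sq_le (hΩ : IsMUniform M Ω) (hM : 1 ≤ M)
    (hbdd : Bornology.IsBounded Ω) (hu : DifferentiableOn ℝ u Ω) (hN : 90 * M ^ 3 ≤ N) :
    ∃ c, ∫⁻ x in Ω, ‖u x - c‖ₑ ^ 2 ≤ (N + 2) ^ 2 * (24 * N) ^ n * ENNReal.ofReal (diam Ω) ^ 2 *
        ∫⁻ x in Ω, ‖fderiv ℝ u x‖ₑ ^ 2 := by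
  obtain ⟨x₀, hx₀⟩ := hΩ.2.1.nonempty
  rcases Ω.subsingleton_or_nontrivial with hsub | hnontriv
  · refine ⟨u x₀, le_of_eq_of_le ?_ zero_le⟩
    rw [setLIntegral_congr_fun hΩ.isOpen.measurableSet fun x hx ↦ by rw [hsub hx hx₀]]
    simp
  have hdiam : 0 < diam Ω := diam_pos hnontriv hbdd
  have hM₀ : 0 < M := by linarith
  obtain ⟨z, hz⟩ := hΩ.exists_isCorkscrewPoint hM₀ hx₀ hdiam le_rfl
  set ρ := diam Ω / (60 * M ^ 2)
  have hρ : 60 * M ^ 2 * ρ = diam Ω := mul_div_cancel₀ _ (by positivity)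
  have hρd : 12 * ρ ≤ diam Ω := by
    rw [← hρ]
    gcongr
    nlinarith
  refine ⟨⨍ y in ball z ρ, u y, (hΩ.lintegral_enorm_sub_average_sq_le hM hu (by positivity) hρ.le hN
    fun x hx ↦ ⟨hz.mem, ?_, hρ ▸ hz.le_infDist⟩).trans (by gcongr)⟩
  exact hρ ▸ dist_le_diam_of_mem hbdd hz.mem hx

end UniformDomains

theorem uniform_poincare_MUniform_general {F : Type*} [NormedAddCommGroup F] [NormedSpace ℝ F]
    [CompleteSpace F] (n : ℕ) (M : ℝ) (hM : 1 ≤ M) :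
    ∃ C : ℝ, 0 < C ∧ ∀ (Ω : Set (EuclideanSpace ℝ (Fin n))) (u : EuclideanSpace ℝ (Fin n) → F),
      IsMUniform M Ω → Bornology.IsBounded Ω → DifferentiableOn ℝ u Ω →
      IntegrableOn (fun x ↦ ‖fderiv ℝ u x‖ ^ 2) Ω →
      MemLp u 2 (volume.restrict Ω) ∧
        ∫ x in Ω, ‖u x - ⨍ y in Ω, u y‖ ^ 2 ≤
          C * diam Ω ^ 2 * ∫ x in Ω, ‖fderiv ℝ u x‖ ^ 2 := by
  obtain ⟨N, hN⟩ := exists_nat_ge (90 * M ^ 3)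
  have hN₀ : 0 < N := by
    have : 0 < M := by linarith
    exact Nat.cast_pos.1 (lt_of_lt_of_le (by positivity) hN)
  obtain ⟨K, hK⟩ : ∃ K : ℕ, K = (N + 2) ^ 2 * (24 * N) ^ n := ⟨_, rfl⟩
  have hK₀ : 0 < K := hK ▸ by positivity
  refine ⟨4 * K, by positivity, fun Ω u hΩ hbdd hu hgrad ↦ ?_⟩
  obtain ⟨c, hc⟩ := hΩ.exists_lintegral_enorm_sub_sq_le hM hbdd hu hN
  have : 0 ≤ ∫ x in Ω, ‖fderiv ℝ u x‖ ^ 2 := by positivity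
  have bound : ∫⁻ x in Ω, ‖u x - c‖ₑ ^ 2 ≤
      ENNReal.ofReal (K * diam Ω ^ 2 * ∫ x in Ω, ‖fderiv ℝ u x‖ ^ 2) := by
    refine hc.trans_eq ?_
    rw [ENNReal.ofReal_mul (by positivity), ENNReal.ofReal_mul (by positivity),
      ofReal_integral_norm_sq_eq_lintegral_enorm_sq hgrad, ENNReal.ofReal_pow diam_nonneg,
      ENNReal.ofReal_natCast, hK]
    push_cast
    rfl
  simpa only [mul_assoc] using memLp_two_and_setIntegral_norm_sub_setAverage_sq_le
    hbdd.measure_lt_top.ne (hu.continuousOn.aestronglyMeasurable hΩ.isOpen.measurableSet)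
    (by positivity) bound

theorem uniform_poincare_MUniform (n : ℕ) (M R : ℝ) (hM : 1 < M) (hR : 0 < R) :
    ∃ C : ℝ, 0 < C ∧
      ∀ (Ω : Set (EuclideanSpace ℝ (Fin n))) (u : EuclideanSpace ℝ (Fin n) → ℝ),
        IsMUniform M Ω → Ω ⊆ Metric.ball 0 R →
        DifferentiableOn ℝ u Ω →
        IntegrableOn u Ω →
        IntegrableOn (fun x => (u x) ^ 2) Ω →
        IntegrableOn (fun x => ‖gradient u x‖ ^ 2) Ω →
        (∫ x in Ω, u x) = 0 →
        ∫ x in Ω, (u x) ^ 2 ≤ C * ∫ x in Ω, ‖gradient u x‖ ^ 2 := by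
  obtain ⟨C, hC, poincare⟩ := uniform_poincare_MUniform_general (F := ℝ) n M hM.le
  refine ⟨C * (2 * R) ^ 2, by positivity, fun Ω u hΩ hΩR hu _ _ hgrad hmean ↦ ?_⟩
  have norm_gradient (x : EuclideanSpace ℝ (Fin n)) : ‖gradient u x‖ = ‖fderiv ℝ u x‖ := by
    simp [gradient]
  have hdiam : diam Ω ≤ 2 * R := (diam_mono hΩR isBounded_ball).trans (diam_ball hR.le)
  simp only [norm_gradient] at hgrad ⊢
  have main := (poincare Ω u hΩ (isBounded_ball.subset hΩR) hu hgrad).2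
  simp only [setAverage_eq, hmean, smul_zero, sub_zero, Real.norm_eq_abs, sq_abs] at main
  refine main.trans ?_
  gcongr
end
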